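/- arXiv:2510.05796 — 4 statements merged into one kernel-verified Lean document; each statement's English description precedes it below -/
import Mathlib

section
/- Let Z : LC(ℝ) → ℝ. Then Z is a τ-continuous, translation invariant and dually epi-translation invariant valuation if and only if there exist constants c₀, c₁ ∈ ℝ such that Z(u) = c₀ + c₁·V₁(dom u) for every u ∈ LC(ℝ). -/
open MeasureTheory Filter Topology Pointwise Asymptotics

noncomputable section

variable {E : Type*} [NormedAddCommGroup E] [NormedSpace ℝ E]

/-- The effective domain of an extended-real-valued function. -/
def edom (u : E → EReal) : Set E := {x | u x < ⊤}

/-- `u` has Lipschitz constant `L` on the interior of its domain. -/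
def LipBound (u : E → EReal) (L : ℝ) : Prop :=
  ∀ x ∈ interior (edom u), ∀ y ∈ interior (edom u),
    |(u x).toReal - (u y).toReal| ≤ L * ‖x - y‖

/-- Membership in `LC`: proper, lower semicontinuous, convex, compact domain,
Lipschitz on the interior of the domain. -/
def IsLC (u : E → EReal) : Prop :=
  (∀ x y : E, ∀ t : ℝ, 0 < t → t < 1 →
      u (t • x + (1 - t) • y) ≤ (t : EReal) * u x + ((1 - t : ℝ) : EReal) * u y) ∧
  LowerSemicontinuous u ∧
  (∀ x, u x ≠ ⊥) ∧
  (∃ x, u x ≠ ⊤) ∧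
  IsCompact (edom u) ∧
  (∃ L : ℝ, 0 < L ∧ LipBound u L)

/-- τ-convergence: epi-convergence together with uniformly bounded Lipschitz constants. -/
def TauConv (uk : ℕ → E → EReal) (u : E → EReal) : Prop :=
  (∀ k, IsLC (uk k)) ∧ IsLC u ∧
  (∀ (x : E) (xk : ℕ → E), Tendsto xk atTop (𝓝 x) →
      u x ≤ liminf (fun k => uk k (xk k)) atTop) ∧
  (∀ x : E, ∃ xk : ℕ → E, Tendsto xk atTop (𝓝 x) ∧
      Tendsto (fun k => uk k (xk k)) atTop (𝓝 (u x))) ∧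
  (∃ M : ℝ, 0 < M ∧ ∀ k, LipBound (uk k) M)

/-- Valuation property on `LC`. -/
def IsVal (Z : (E → EReal) → ℝ) : Prop :=
  ∀ u v : E → EReal, IsLC u → IsLC v → IsLC (fun x => min (u x) (v x)) →
    Z (fun x => min (u x) (v x)) + Z (fun x => max (u x) (v x)) = Z u + Z v

/-- τ-upper semicontinuity. -/
def TauUSC (Z : (E → EReal) → ℝ) : Prop :=
  ∀ (uk : ℕ → E → EReal) (u : E → EReal), TauConv uk u →
    limsup (fun k => Z (uk k)) atTop ≤ Z u

/-- τ-continuity. -/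
def TauCont (Z : (E → EReal) → ℝ) : Prop :=
  ∀ (uk : ℕ → E → EReal) (u : E → EReal), TauConv uk u →
    Tendsto (fun k => Z (uk k)) atTop (𝓝 (Z u))

/-- Translation invariance. -/
def TransInv (Z : (E → EReal) → ℝ) : Prop :=
  ∀ u : E → EReal, IsLC u → ∀ y : E, Z (fun x => u (x - y)) = Z u

/-- Dual epi-translation invariance. -/
def DualTransInv (Z : (E → EReal) → ℝ) : Prop :=
  ∀ u : E → EReal, IsLC u → ∀ (l : E →ₗ[ℝ] ℝ) (c : ℝ),
    Z (fun x => u x + ((l x + c : ℝ) : EReal)) = Z u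

/-- SL_n invariance. -/
def SLInv (Z : (E → EReal) → ℝ) : Prop :=
  ∀ u : E → EReal, IsLC u → ∀ φ : E →ₗ[ℝ] E, LinearMap.det φ = 1 →
    Z (fun x => u (φ x)) = Z u

/-- The class `Conc`. -/
def IsConc (ζ : ℝ → ℝ) : Prop :=
  (∀ t ∈ Set.Ici (0 : ℝ), 0 ≤ ζ t) ∧ ConcaveOn ℝ (Set.Ici 0) ζ ∧
  Tendsto ζ (𝓝[>] 0) (𝓝 0) ∧
  Tendsto (fun t => ζ t / t) atTop (𝓝 0)

open Classical in
/-- `(∞-valued) indicator function` of a set. -/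
noncomputable def eIndicator (K : Set E) : E → EReal := fun x =>
  if x ∈ K then (0 : EReal) else ⊤

/-- Real part of an extended-real-valued function. -/
def toRealFn (u : E → EReal) : E → ℝ := fun x => (u x).toReal

open Classical in
/-- Second derivative of `u`, set to `0` where `u` is not twice differentiable. -/
noncomputable def secondDeriv (u : ℝ → EReal) : ℝ → ℝ := fun x =>
  if DifferentiableAt ℝ (toRealFn u) x ∧ DifferentiableAt ℝ (deriv (toRealFn u)) x
  then deriv (deriv (toRealFn u)) x
  else 0

/-- Real function restricted to an interval, `⊤` outside. -/
def UU (g : ℝ → ℝ) (a b : ℝ) : ℝ → EReal := fun x =>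
  if a ≤ x ∧ x ≤ b then (g x : EReal) else ⊤

/-- Convex and Lipschitz on the interval. -/
def Good (g : ℝ → ℝ) (a b L : ℝ) : Prop :=
  ConvexOn ℝ (Set.Icc a b) g ∧
    ∀ x ∈ Set.Icc a b, ∀ y ∈ Set.Icc a b, |g x - g y| ≤ L * |x - y|

lemma UU_in {g : ℝ → ℝ} {a b x : ℝ} (h : x ∈ Set.Icc a b) : UU g a b x = (g x : EReal) := by
  have h' : a ≤ x ∧ x ≤ b := h
  simp [UU, h']

lemma UU_out {g : ℝ → ℝ} {a b x : ℝ} (h : x ∉ Set.Icc a b) : UU g a b x = ⊤ := by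
  have h' : ¬ (a ≤ x ∧ x ≤ b) := h
  simp only [UU, if_neg h']

lemma UU_congr {g h : ℝ → ℝ} {a b : ℝ} (H : ∀ x ∈ Set.Icc a b, g x = h x) :
    UU g a b = UU h a b := by
  funext x
  by_cases hx : x ∈ Set.Icc a b
  · rw [UU_in hx, UU_in hx, H x hx]
  · rw [UU_out hx, UU_out hx]

lemma edom_UU (g : ℝ → ℝ) (a b : ℝ) : edom (UU g a b) = Set.Icc a b := by
  ext x
  by_cases hx : x ∈ Set.Icc a b
  · simp only [edom, Set.mem_ofPred_eq, UU_in hx, hx, iff_true]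
    exact EReal.coe_lt_top _
  · simp only [edom, Set.mem_ofPred_eq, UU_out hx, hx, iff_false]
    exact lt_irrefl _

lemma lipBound_UU {g : ℝ → ℝ} {a b L : ℝ} (h : Good g a b L) : LipBound (UU g a b) L := by
  intro x hx y hy
  rw [edom_UU] at hx hy
  have hx := interior_subset hx
  have hy := interior_subset hy
  rw [UU_in hx, UU_in hy]
  exact h.2 x hx y hy

lemma Good.cont {g : ℝ → ℝ} {a b L : ℝ} (hL : 0 < L) (h : Good g a b L) :
    ContinuousOn g (Set.Icc a b) := by
  have : LipschitzOnWith (Real.toNNReal L) g (Set.Icc a b) := by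
    apply LipschitzOnWith.of_dist_le_mul
    intro x hx y hy
    rw [Real.dist_eq, Real.dist_eq, Real.coe_toNNReal _ hL.le]
    exact h.2 x hx y hy
  exact this.continuousOn

lemma isLC_UU {g : ℝ → ℝ} {a b L : ℝ} (hab : a ≤ b) (hL : 0 < L) (h : Good g a b L) :
    IsLC (UU g a b) := by
  refine ⟨?_, ?_, ?_, ?_, ?_, L, hL, lipBound_UU h⟩
  · intro x y t ht0 ht1
    have ht1' : 0 < 1 - t := by linarith
    have hbot : ∀ (s : ℝ), 0 < s → ∀ z, (s : EReal) * UU g a b z ≠ ⊥ := by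
      intro s hs z
      by_cases hz : z ∈ Set.Icc a b
      · rw [UU_in hz, ← EReal.coe_mul]; exact EReal.coe_ne_bot _
      · rw [UU_out hz, EReal.coe_mul_top_of_pos hs]; simp
    by_cases hx : x ∈ Set.Icc a b
    · by_cases hy : y ∈ Set.Icc a b
      · have hm : t • x + (1 - t) • y ∈ Set.Icc a b :=
          (convex_Icc a b) hx hy ht0.le ht1'.le (by ring)
        rw [UU_in hx, UU_in hy, UU_in hm]
        have := h.1.2 hx hy ht0.le ht1'.le (by ring)
        simp only [smul_eq_mul] at this ⊢
        exact_mod_cast this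
      · rw [UU_out hy, EReal.coe_mul_top_of_pos ht1', EReal.add_top_of_ne_bot (hbot t ht0 x)]
        exact le_top
    · rw [UU_out hx, EReal.coe_mul_top_of_pos ht0, EReal.top_add_of_ne_bot (hbot _ ht1' y)]
      exact le_top
  · intro x y hy
    by_cases hx : x ∈ Set.Icc a b
    · rw [UU_in hx] at hy
      have hc := (h.cont hL) x hx
      have hc2 : Tendsto (fun z => (g z : EReal)) (𝓝[Set.Icc a b] x) (𝓝 (g x : EReal)) :=
        (continuous_coe_real_ereal.tendsto _).comp hc
      have := hc2.eventually (lt_mem_nhds hy)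
      rw [eventually_nhdsWithin_iff] at this
      filter_upwards [this] with z hz
      by_cases hzz : z ∈ Set.Icc a b
      · rw [UU_in hzz]; exact hz hzz
      · rw [UU_out hzz]; exact lt_of_lt_of_le hy le_top
    · have : (Set.Icc a b)ᶜ ∈ 𝓝 x := isClosed_Icc.isOpen_compl.mem_nhds hx
      filter_upwards [this] with z hz
      rw [UU_out hz]; rw [UU_out hx] at hy; exact hy
  · intro x
    by_cases hx : x ∈ Set.Icc a b
    · rw [UU_in hx]; exact EReal.coe_ne_bot _
    · rw [UU_out hx]; simp
  · exact ⟨a, by rw [UU_in ⟨le_rfl, hab⟩]; exact EReal.coe_ne_top _⟩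
  · rw [edom_UU]; exact isCompact_Icc

lemma exists_UU {u : ℝ → EReal} (hu : IsLC u) : ∃ (a b : ℝ) (g : ℝ → ℝ), a ≤ b ∧ u = UU g a b ∧
    ∀ L, 0 < L → LipBound u L → Good g a b L := by
  obtain ⟨hc, hlsc, hbot, ⟨x0, hx0⟩, hcomp, -⟩ := hu
  have hreal : ∀ x ∈ edom u, u x = ((u x).toReal : EReal) := by
    intro x hx
    exact (EReal.coe_toReal (ne_of_lt hx) (hbot x)).symm
  have hin : ∀ x ∈ edom u, ∀ y ∈ edom u, ∀ t : ℝ, 0 < t → t < 1 → 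
      u (t • x + (1 - t) • y) ≤ ((t * (u x).toReal + (1 - t) * (u y).toReal : ℝ) : EReal) := by
    intro x hx y hy t h0 h1
    have := hc x y t h0 h1
    rw [hreal x hx, hreal y hy] at this
    exact_mod_cast this
  have hconv : Convex ℝ (edom u) := by
    rw [convex_iff_forall_pos]
    intro x hx y hy s t hs ht hst
    obtain rfl : t = 1 - s := by linarith
    exact lt_of_le_of_lt (hin x hx y hy s hs (by linarith)) (EReal.coe_lt_top _)
  have hne : (edom u).Nonempty := ⟨x0, lt_top_iff_ne_top.2 hx0⟩
  have hconn : IsConnected (edom u) := ⟨hne, hconv.isPreconnected⟩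
  have hI := eq_Icc_of_connected_compact hconn hcomp
  set a := sInf (edom u)
  set b := sSup (edom u)
  have hab : a ≤ b := by
    rw [hI] at hne; exact Set.nonempty_Icc.1 hne
  refine ⟨a, b, fun x => (u x).toReal, hab, ?_, ?_⟩
  · funext x
    by_cases hx : x ∈ Set.Icc a b
    · rw [UU_in hx]; exact hreal x (hI ▸ hx)
    · rw [UU_out hx]
      rw [← hI] at hx
      exact not_lt_top_iff.1 hx
  have hcv : ConvexOn ℝ (Set.Icc a b) (fun x => (u x).toReal) := by
    rw [convexOn_iff_forall_pos]
    refine ⟨convex_Icc a b, ?_⟩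
    intro x hx y hy s t hs ht hst
    obtain rfl : t = 1 - s := by linarith
    rw [← hI] at hx hy
    have := hin x hx y hy s hs (by linarith)
    rw [hreal _ (hconv hx hy hs.le ht.le hst)] at this
    simp only [smul_eq_mul] at this ⊢
    exact_mod_cast this
  intro L hL hlip
  refine ⟨hcv, ?_⟩
  set g : ℝ → ℝ := fun x => (u x).toReal with hg
  rcases hab.eq_or_lt with hab' | hab'
  · intro x hx y hy
    have : x = y := by linarith [hx.1, hx.2, hy.1, hy.2]
    subst this; simp
  have hl : ∀ x ∈ Set.Ioo a b, ∀ y ∈ Set.Ioo a b, |g x - g y| ≤ L * |x - y| := by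
    intro x hx y hy
    rw [← interior_Icc, ← hI] at hx hy
    exact hlip x hx y hy
  have hA : ∀ x ∈ Set.Icc a b, ∀ y ∈ Set.Ioo a b, g x ≤ g y + L * |x - y| := by
    intro x hx y hy
    by_contra hcon
    push Not at hcon
    obtain ⟨r, hr1, hr2⟩ := exists_between hcon
    have hux : (r : EReal) < u x := by
      rw [hreal x (hI ▸ hx)]; exact_mod_cast hr2
    have e1 := hlsc x r hux
    have e2 : ∀ᶠ z in 𝓝 x, g y + L * |z - y| < r := by
      have : Continuous (fun z => g y + L * |z - y|) := by fun_prop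
      exact this.continuousAt.eventually (gt_mem_nhds hr1)
    have hcl : x ∈ closure (Set.Ioo a b) := by rw [closure_Ioo hab'.ne]; exact hx
    obtain ⟨z, ⟨hz1, hz2⟩, hz3⟩ := mem_closure_iff_nhds.1 hcl _ (e1.and e2)
    rw [hreal z (hI ▸ Set.Ioo_subset_Icc_self hz3)] at hz1
    have hz1 : r < g z := by exact_mod_cast hz1
    have := (abs_le.1 (hl z hz3 y hy)).2
    linarith
  have hB : ∀ x ∈ Set.Icc a b, ∀ y ∈ Set.Ioo a b, |g x - g y| ≤ L * |x - y| := by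
    intro x hx y hy
    have h1 := hA x hx y hy
    have hz : (x + y) / 2 ∈ Set.Ioo a b := ⟨by linarith [hx.1, hy.1], by linarith [hx.2, hy.2]⟩
    have h2 := (abs_le.1 (hl _ hz y hy)).1
    have h3 : |(x + y) / 2 - y| = |x - y| / 2 := by
      rw [show (x + y) / 2 - y = (x - y) / 2 by ring, abs_div]; simp
    rw [h3] at h2
    have h4 := hcv.2 hx (Set.Ioo_subset_Icc_self hy) (by norm_num : (0:ℝ) ≤ 1/2)
      (by norm_num : (0:ℝ) ≤ 1/2) (by norm_num)
    simp only [smul_eq_mul] at h4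
    rw [show 1 / 2 * x + 1 / 2 * y = (x + y) / 2 by ring] at h4
    change g ((x+y)/2) ≤ 1/2 * g x + 1/2 * g y at h4
    rw [abs_le]; constructor <;> linarith
  intro x hx y hy
  rcases eq_or_ne x y with rfl | hxy
  · simp
  have hz : (x + y) / 2 ∈ Set.Ioo a b := by
    rcases lt_or_gt_of_ne hxy with h | h
    · exact ⟨by linarith [hx.1], by linarith [hy.2]⟩
    · exact ⟨by linarith [hy.1], by linarith [hx.2]⟩
  have h1 := hB x hx _ hz
  have h2 := hB y hy _ hz
  have h3 : |x - (x + y) / 2| = |x - y| / 2 := by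
    rw [show x - (x + y) / 2 = (x - y) / 2 by ring, abs_div]; simp
  have h4 : |y - (x + y) / 2| = |x - y| / 2 := by
    rw [show y - (x + y) / 2 = - ((x - y) / 2) by ring, abs_neg, abs_div]; simp
  rw [h3] at h1
  rw [h4] at h2
  rw [abs_le] at *
  constructor <;> linarith [h1.1, h1.2, h2.1, h2.2]

/-! ### The easy direction -/

lemma vol_UU {g : ℝ → ℝ} {a b : ℝ} (hab : a ≤ b) :
    (volume (edom (UU g a b))).toReal = b - a := by
  rw [edom_UU, Real.volume_Icc, ENNReal.toReal_ofReal (by linarith)]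

lemma isLC_shift {u : ℝ → EReal} (hu : IsLC u) (y : ℝ) :
    IsLC (fun x => u (x - y)) ∧
      (volume (edom (fun x => u (x - y)))).toReal = (volume (edom u)).toReal := by
  obtain ⟨L, hL, hlip⟩ := hu.2.2.2.2.2
  obtain ⟨a, b, g, hab, rfl, hg⟩ := exists_UU hu
  have hg := hg L hL hlip
  have e : (fun x => UU g a b (x - y)) = UU (fun x => g (x - y)) (a + y) (b + y) := by
    funext x
    by_cases hx : x - y ∈ Set.Icc a b
    · rw [UU_in hx, UU_in (⟨by linarith [hx.1], by linarith [hx.2]⟩)]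
    · rw [UU_out hx, UU_out]
      intro h; exact hx ⟨by linarith [h.1], by linarith [h.2]⟩
  have hm : ∀ x ∈ Set.Icc (a + y) (b + y), x - y ∈ Set.Icc a b := fun x h =>
    ⟨by linarith [h.1], by linarith [h.2]⟩
  rw [e, vol_UU hab, vol_UU (by linarith)]
  refine ⟨isLC_UU (by linarith) hL ⟨⟨convex_Icc _ _, ?_⟩, ?_⟩, by ring⟩
  · intro p hp q hq s t hs ht hst
    have := hg.1.2 (hm p hp) (hm q hq) hs ht hst
    simp only [smul_eq_mul] at this ⊢
    convert this using 2
    linear_combination y * hst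
  · intro p hp q hq
    have := hg.2 _ (hm p hp) _ (hm q hq)
    convert this using 3
    ring

lemma isLC_dual {u : ℝ → EReal} (hu : IsLC u) (l : ℝ →ₗ[ℝ] ℝ) (c : ℝ) :
    IsLC (fun x => u x + ((l x + c : ℝ) : EReal)) ∧
      (volume (edom (fun x => u x + ((l x + c : ℝ) : EReal)))).toReal
        = (volume (edom u)).toReal := by
  obtain ⟨L, hL, hlip⟩ := hu.2.2.2.2.2
  obtain ⟨a, b, g, hab, rfl, hg⟩ := exists_UU hu
  have hg := hg L hL hlip
  have e : (fun x => UU g a b x + ((l x + c : ℝ) : EReal)) = UU (fun x => g x + (l x + c)) a b := by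
    funext x
    by_cases hx : x ∈ Set.Icc a b
    · rw [UU_in hx, UU_in hx, ← EReal.coe_add]
    · rw [UU_out hx, UU_out hx, EReal.top_add_coe]
  have hl : ∀ x, l x = x * l 1 := by
    intro x
    have := l.map_smul x 1
    simpa using this
  rw [e, vol_UU hab, vol_UU hab]
  refine ⟨isLC_UU hab (L := L + |l 1|) (by positivity) ⟨⟨convex_Icc _ _, ?_⟩, ?_⟩, rfl⟩
  · intro p hp q hq s t hs ht hst
    have := hg.1.2 hp hq hs ht hst
    beta_reduce
    rw [hl (s • p + t • q), hl p, hl q]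
    simp only [smul_eq_mul] at this ⊢
    have hc : c = (s + t) * c := by rw [hst]; ring
    nlinarith
  · intro p hp q hq
    have := hg.2 _ hp _ hq
    beta_reduce
    rw [hl p, hl q]
    rw [show g p + (p * l 1 + c) - (g q + (q * l 1 + c)) = (g p - g q) + l 1 * (p - q) by ring]
    refine (abs_add_le _ _).trans ?_
    rw [abs_mul]; linarith

lemma isLC_max {u v : ℝ → EReal} (hu : IsLC u) (hv : IsLC v)
    (hm : IsLC (fun x => min (u x) (v x))) :
    IsLC (fun x => max (u x) (v x)) ∧
      (volume (edom (fun x => min (u x) (v x)))).toReal +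
        (volume (edom (fun x => max (u x) (v x)))).toReal =
      (volume (edom u)).toReal + (volume (edom v)).toReal := by
  obtain ⟨L, hL, hlip⟩ := hu.2.2.2.2.2
  obtain ⟨M, hM, hlipv⟩ := hv.2.2.2.2.2
  obtain ⟨a, b, g, hab, rfl, hg⟩ := exists_UU hu
  obtain ⟨c, d, h, hcd, rfl, hh⟩ := exists_UU hv
  obtain ⟨p, q, k, hpq, hk, -⟩ := exists_UU hm
  have hg := hg L hL hlip
  have hh := hh M hM hlipv
  have e1 : edom (fun x => min (UU g a b x) (UU h c d x)) = Set.Icc a b ∪ Set.Icc c d := by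
    rw [← edom_UU g a b, ← edom_UU h c d]
    ext x
    simp only [edom, Set.mem_ofPred_eq, Set.mem_union, min_lt_iff]
  have e2 : edom (fun x => max (UU g a b x) (UU h c d x)) = Set.Icc a b ∩ Set.Icc c d := by
    rw [← edom_UU g a b, ← edom_UU h c d]
    ext x
    simp only [edom, Set.mem_ofPred_eq, Set.mem_inter_iff, max_lt_iff]
  have e3 : Set.Icc a b ∪ Set.Icc c d = Set.Icc p q := by
    rw [← e1, hk, edom_UU]
  have ha : a ∈ Set.Icc p q := e3 ▸ Or.inl ⟨le_rfl, hab⟩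
  have hb : b ∈ Set.Icc p q := e3 ▸ Or.inl ⟨hab, le_rfl⟩
  have hc : c ∈ Set.Icc p q := e3 ▸ Or.inr ⟨le_rfl, hcd⟩
  have hd : d ∈ Set.Icc p q := e3 ▸ Or.inr ⟨hcd, le_rfl⟩
  have hcb : c ≤ b := by
    by_contra hcon
    push Not at hcon
    have : (b + c) / 2 ∈ Set.Icc a b ∪ Set.Icc c d := by
      rw [e3]; exact ⟨by linarith [hb.1, hc.1], by linarith [hb.2, hc.2]⟩
    rcases this with h | h
    · linarith [h.2]
    · linarith [h.1]
  have had : a ≤ d := by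
    by_contra hcon
    push Not at hcon
    have : (a + d) / 2 ∈ Set.Icc a b ∪ Set.Icc c d := by
      rw [e3]; exact ⟨by linarith [ha.1, hd.1], by linarith [ha.2, hd.2]⟩
    rcases this with h | h
    · linarith [h.1]
    · linarith [h.2]
  constructor
  · have e : (fun x => max (UU g a b x) (UU h c d x)) =
        UU (fun x => max (g x) (h x)) (max a c) (min b d) := by
      funext x
      by_cases hx : x ∈ Set.Icc a b
      · by_cases hy : x ∈ Set.Icc c d
        · rw [UU_in hx, UU_in hy, UU_in ⟨max_le hx.1 hy.1, le_min hx.2 hy.2⟩]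
          exact (EReal.coe_strictMono.monotone.map_max).symm
        · rw [UU_out hy, UU_out (fun h => hy ⟨(le_max_right _ _).trans h.1,
            h.2.trans (min_le_right _ _)⟩)]
          simp
      · rw [UU_out hx, UU_out (fun h => hx ⟨(le_max_left _ _).trans h.1,
            h.2.trans (min_le_left _ _)⟩)]
        simp
    have i1 : Set.Icc (max a c) (min b d) ⊆ Set.Icc a b :=
      Set.Icc_subset_Icc (le_max_left _ _) (min_le_left _ _)
    have i2 : Set.Icc (max a c) (min b d) ⊆ Set.Icc c d :=
      Set.Icc_subset_Icc (le_max_right _ _) (min_le_right _ _)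
    rw [e]
    refine isLC_UU (L := max L M) (max_le (le_min hab had) (le_min hcb hcd))
      (lt_max_of_lt_left hL) ⟨?_, ?_⟩
    · exact (hg.1.subset i1 (convex_Icc _ _)).sup (hh.1.subset i2 (convex_Icc _ _))
    · intro x hx y hy
      refine (abs_max_sub_max_le_max _ _ _ _).trans ?_
      refine max_le ((hg.2 x (i1 hx) y (i1 hy)).trans ?_) ((hh.2 x (i2 hx) y (i2 hy)).trans ?_)
      · exact mul_le_mul_of_nonneg_right (le_max_left _ _) (abs_nonneg _)
      · exact mul_le_mul_of_nonneg_right (le_max_right _ _) (abs_nonneg _)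
  · rw [e1, e2, edom_UU, edom_UU]
    have := measure_union_add_inter (μ := volume) (Set.Icc a b) (t := Set.Icc c d) measurableSet_Icc
    rw [← ENNReal.toReal_add, ← ENNReal.toReal_add, this]
    · simp
    · simp
    · rw [e3]; simp
    · exact ne_top_of_le_ne_top (by simp) (measure_mono (μ := volume) Set.inter_subset_left)

lemma endpoint_bound {uk : ℕ → ℝ → EReal} {u : ℝ → EReal} (h : TauConv uk u)
    (ak bk : ℕ → ℝ) (gk : ℕ → ℝ → ℝ) (g : ℝ → ℝ) (a b M : ℝ) (hab : a ≤ b) (hM : 0 < M)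
    (huk : ∀ k, uk k = UU (gk k) (ak k) (bk k)) (hu : u = UU g a b)
    (hgk : ∀ k, Good (gk k) (ak k) (bk k) M) (σ e : ℝ) (hσ : |σ| = 1) (he : e ∈ Set.Icc a b)
    (hout : ∀ ε > 0, e + σ * ε ∉ Set.Icc a b) (ε : ℝ) (hε : 0 < ε) :
    ∀ᶠ k in atTop, ∃ x ∈ Set.Icc (ak k) (bk k), |x - e| < ε ∧ x + σ * ε ∉ Set.Icc (ak k) (bk k) := by
  obtain ⟨-, -, h1, h2, -⟩ := h
  obtain ⟨xk, hx, hux⟩ := h2 e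
  have hx2 : Tendsto (fun k => xk k + σ * ε) atTop (𝓝 (e + σ * ε)) := hx.add_const _
  have hl := h1 _ _ hx2
  rw [hu, UU_out (hout ε hε)] at hl
  rw [hu, UU_in he] at hux
  have f1 : ∀ᶠ k in atTop, uk k (xk k) < ((g e + 1 : ℝ) : EReal) :=
    hux.eventually (gt_mem_nhds (by exact_mod_cast (lt_add_one _)))
  have f2 : ∀ᶠ k in atTop, ((g e + 1 + M * ε : ℝ) : EReal) < uk k (xk k + σ * ε) :=
    eventually_lt_of_lt_liminf (lt_of_lt_of_le (EReal.coe_lt_top _) hl)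
  have f3 : ∀ᶠ k in atTop, |xk k - e| < ε := by
    have := Metric.tendsto_nhds.1 hx ε hε
    simpa [Real.dist_eq] using this
  filter_upwards [f1, f2, f3] with k k1 k2 k3
  rw [huk] at k1 k2
  have hin : xk k ∈ Set.Icc (ak k) (bk k) := by
    by_contra hcon
    rw [UU_out hcon] at k1
    exact absurd k1 (not_lt.2 le_top)
  refine ⟨xk k, hin, k3, ?_⟩
  intro hin2
  rw [UU_in hin] at k1
  rw [UU_in hin2] at k2
  have k1 : gk k (xk k) < g e + 1 := by exact_mod_cast k1
  have k2 : g e + 1 + M * ε < gk k (xk k + σ * ε) := by exact_mod_cast k2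
  have := (hgk k).2 _ hin2 _ hin
  rw [show xk k + σ * ε - xk k = σ * ε by ring, abs_mul, hσ, one_mul, abs_of_pos hε] at this
  linarith [(abs_le.1 this).2]

lemma vol_tendsto {uk : ℕ → ℝ → EReal} {u : ℝ → EReal} (h : TauConv uk u) :
    Tendsto (fun k => (volume (edom (uk k))).toReal) atTop (𝓝 (volume (edom u)).toReal) := by
  have h' := h
  obtain ⟨hk, hu, -, -, M, hM, hlip⟩ := h'
  choose ak bk gk habk hukk hgk using fun k => exists_UU (hk k)
  obtain ⟨a, b, g, hab, hug, -⟩ := exists_UU hu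
  have hgk : ∀ k, Good (gk k) (ak k) (bk k) M := fun k => hgk k M hM (hlip k)
  have hR := endpoint_bound h ak bk gk g a b M hab hM hukk hug hgk 1 b (by simp) ⟨hab, le_rfl⟩
    (fun ε hε hh => by linarith [hh.2])
  have hA := endpoint_bound h ak bk gk g a b M hab hM hukk hug hgk (-1) a (by simp) ⟨le_rfl, hab⟩
    (fun ε hε hh => by linarith [hh.1])
  have e : (fun k => (volume (edom (uk k))).toReal) = fun k => bk k - ak k := by
    funext k; rw [hukk k, vol_UU (habk k)]
  rw [e, hug, vol_UU hab, Metric.tendsto_nhds]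
  intro ε hε
  filter_upwards [hR (ε / 4) (by linarith), hA (ε / 4) (by linarith)] with k
  rintro ⟨x, hx, hx1, hx2⟩ ⟨y, hy, hy1, hy2⟩
  rw [abs_lt] at hx1 hy1
  have t1 : bk k < x + ε / 4 := by
    by_contra hcon; push Not at hcon
    exact hx2 ⟨by linarith [hx.1], by linarith⟩
  have t2 : y - ε / 4 < ak k := by
    by_contra hcon; push Not at hcon
    exact hy2 ⟨by linarith, by linarith [hy.2]⟩
  rw [Real.dist_eq, abs_lt]
  constructor <;> linarith [hx1.1, hx1.2, hy1.1, hy1.2, hx.2, hy.1]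

lemma easy_dir (Z : (ℝ → EReal) → ℝ) (c₀ c₁ : ℝ) (hZ : ∀ u : ℝ → EReal, IsLC u →
      Z u = c₀ + c₁ * (volume (edom u)).toReal) :
    (IsVal Z ∧ TauCont Z ∧ TransInv Z ∧ DualTransInv Z) := by
  refine ⟨?_, ?_, ?_, ?_⟩
  · intro u v hu hv hm
    have := isLC_max hu hv hm
    rw [hZ _ hu, hZ _ hv, hZ _ hm, hZ _ this.1]
    linear_combination c₁ * this.2
  · intro uk u h
    have e : (fun k => Z (uk k)) = fun k => c₀ + c₁ * (volume (edom (uk k))).toReal := by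
      funext k; exact hZ _ (h.1 k)
    rw [e, hZ _ h.2.1]
    exact ((vol_tendsto h).const_mul _).const_add _
  · intro u hu y
    have := isLC_shift hu y
    rw [hZ _ hu, hZ _ this.1, this.2]
  · intro u hu l c
    have := isLC_dual hu l c
    rw [hZ _ hu, hZ _ this.1, this.2]

/-! ### The hard direction -/

/-- Globally convex and Lipschitz. -/
def Glob (w : ℝ → ℝ) (L : ℝ) : Prop :=
  ConvexOn ℝ Set.univ w ∧ ∀ x y, |w x - w y| ≤ L * |x - y|

lemma Glob.good {w : ℝ → ℝ} {L : ℝ} (h : Glob w L) (a b : ℝ) : Good w a b L :=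
  ⟨h.1.subset (Set.subset_univ _) (convex_Icc _ _), fun x _ y _ => h.2 x y⟩

lemma Glob.isLC {w : ℝ → ℝ} {L : ℝ} (h : Glob w L) (hL : 0 < L) {a b : ℝ} (hab : a ≤ b) :
    IsLC (UU w a b) := isLC_UU hab hL (h.good a b)

lemma glob_affine {s L : ℝ} (hs : |s| ≤ L) (c : ℝ) : Glob (fun x => s * x + c) L := by
  refine ⟨⟨convex_univ, ?_⟩, ?_⟩
  · intro p _ q _ α β hα hβ hab
    simp only [smul_eq_mul]
    apply le_of_eq
    linear_combination (-c) * hab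
  · intro x y
    rw [show s * x + c - (s * y + c) = s * (x - y) by ring, abs_mul]
    exact mul_le_mul_of_nonneg_right hs (abs_nonneg _)

lemma Glob.max {v w : ℝ → ℝ} {L : ℝ} (h : Glob v L) (h' : Glob w L) :
    Glob (fun x => Max.max (v x) (w x)) L := by
  refine ⟨h.1.sup h'.1, fun x y => ?_⟩
  exact (abs_max_sub_max_le_max _ _ _ _).trans (max_le (h.2 x y) (h'.2 x y))

lemma split_UU {Z : (ℝ → EReal) → ℝ} (hZ : IsVal Z) {w : ℝ → ℝ} {L : ℝ} (hL : 0 < L)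
    (h : Glob w L) {a c b : ℝ} (hac : a ≤ c) (hcb : c ≤ b) :
    Z (UU w a b) + Z (UU w c c) = Z (UU w a c) + Z (UU w c b) := by
  have e1 : (fun x => min (UU w a c x) (UU w c b x)) = UU w a b := by
    funext x
    by_cases h1 : x ∈ Set.Icc a c
    · have h3 : x ∈ Set.Icc a b := ⟨h1.1, h1.2.trans hcb⟩
      by_cases h2 : x ∈ Set.Icc c b
      · rw [UU_in h1, UU_in h2, UU_in h3, min_self]
      · rw [UU_in h1, UU_out h2, UU_in h3]; simp
    · by_cases h2 : x ∈ Set.Icc c b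
      · have h3 : x ∈ Set.Icc a b := ⟨hac.trans h2.1, h2.2⟩
        rw [UU_out h1, UU_in h2, UU_in h3]; simp
      · have h3 : x ∉ Set.Icc a b := by
          intro h3
          rcases le_total x c with hx | hx
          · exact h1 ⟨h3.1, hx⟩
          · exact h2 ⟨hx, h3.2⟩
        rw [UU_out h1, UU_out h2, UU_out h3]; simp
  have e2 : (fun x => max (UU w a c x) (UU w c b x)) = UU w c c := by
    funext x
    by_cases h1 : x ∈ Set.Icc a c
    · by_cases h2 : x ∈ Set.Icc c b
      · rw [UU_in h1, UU_in h2, UU_in ⟨h2.1, h1.2⟩, max_self]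
      · have h4 : x ∉ Set.Icc c c := fun h3 => h2 ⟨h3.1, h3.2.trans hcb⟩
        rw [UU_out h2, UU_out h4]
        simp
    · have h4 : x ∉ Set.Icc c c := fun h3 => h1 ⟨hac.trans h3.1, h3.2⟩
      rw [UU_out h1, UU_out h4]
      simp
  have := hZ (UU w a c) (UU w c b) (h.isLC hL hac) (h.isLC hL hcb)
    (by rw [e1]; exact h.isLC hL (hac.trans hcb))
  rw [e1, e2] at this
  exact this

lemma glob_zero : Glob (fun _ => (0 : ℝ)) 1 := by
  have := glob_affine (s := 0) (L := 1) (by simp) 0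
  simpa using this

lemma Z_shift {Z : (ℝ → EReal) → ℝ} (hT : TransInv Z) {a b : ℝ} (hab : a ≤ b) :
    Z (UU (fun _ => 0) a b) = Z (UU (fun _ => 0) 0 (b - a)) := by
  have h := hT (UU (fun _ => 0) 0 (b - a)) (glob_zero.isLC one_pos (by linarith)) a
  rw [← h]
  congr 1
  funext x
  by_cases hx : x ∈ Set.Icc a b
  · rw [UU_in hx, UU_in (⟨by linarith [hx.1], by linarith [hx.2]⟩)]
  · rw [UU_out hx, UU_out]
    intro h; exact hx ⟨by linarith [h.1], by linarith [h.2]⟩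

lemma Z_affine {Z : (ℝ → EReal) → ℝ} (hD : DualTransInv Z) {a b : ℝ} (hab : a ≤ b) (s c : ℝ) :
    Z (UU (fun x => s * x + c) a b) = Z (UU (fun _ => 0) a b) := by
  have h := hD (UU (fun _ => 0) a b) (glob_zero.isLC one_pos hab) (LinearMap.mulLeft ℝ s) c
  rw [← h]
  congr 1
  funext x
  by_cases hx : x ∈ Set.Icc a b
  · rw [UU_in hx, UU_in hx]; simp
  · rw [UU_out hx, UU_out hx, EReal.top_add_coe]

lemma cont_f {Z : (ℝ → EReal) → ℝ} (hC : TauCont Z) :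
    Continuous (fun t : ℝ => Z (UU (fun _ => 0) 0 (max t 0))) := by
  rw [continuous_iff_seqContinuous]
  intro tk t ht
  apply hC
  have ht' : Tendsto (fun k => max (tk k) 0) atTop (𝓝 (max t 0)) :=
    ((continuous_id.max continuous_const).tendsto t).comp ht
  have hout : ∀ (x : ℝ) (xk : ℕ → ℝ), Tendsto xk atTop (𝓝 x) → x ∉ Set.Icc 0 (max t 0) →
      ∀ᶠ k in atTop, UU (fun _ => 0) 0 (max (tk k) 0) (xk k) = ⊤ := by
    intro x xk hx hx0
    by_cases h0 : 0 ≤ x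
    · have h1 : max t 0 < x := by
        by_contra hcon; push Not at hcon; exact hx0 ⟨h0, hcon⟩
      filter_upwards [ht'.eventually_lt hx h1] with k hk
      exact UU_out (fun h => absurd h.2 (not_le.2 hk))
    · push Not at h0
      filter_upwards [hx.eventually (gt_mem_nhds h0)] with k hk
      exact UU_out (fun h => absurd h.1 (not_le.2 hk))
  refine ⟨fun k => glob_zero.isLC one_pos (le_max_right _ _),
    glob_zero.isLC one_pos (le_max_right _ _), ?_, ?_, 1, one_pos,
    fun k => lipBound_UU (glob_zero.good _ _)⟩
  · intro x xk hx
    by_cases hx0 : x ∈ Set.Icc 0 (max t 0)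
    · rw [UU_in hx0]
      refine le_liminf_of_le (by isBoundedDefault) (Eventually.of_forall fun k => ?_)
      simp only [UU]
      split_ifs <;> simp
    · refine le_liminf_of_le (by isBoundedDefault) ?_
      filter_upwards [hout x xk hx hx0] with k hk
      rw [hk]; exact le_top
  · intro x
    by_cases hx0 : x ∈ Set.Icc 0 (max t 0)
    · refine ⟨fun k => min x (max (tk k) 0), ?_, ?_⟩
      · have := (tendsto_const_nhds (x := x)).min ht'
        rwa [min_eq_left hx0.2] at this
      · rw [UU_in hx0]
        refine tendsto_const_nhds.congr fun k => ?_
        beta_reduce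
        rw [UU_in ⟨le_min hx0.1 (le_max_right _ _), min_le_right _ _⟩]
    · refine ⟨fun _ => x, tendsto_const_nhds, ?_⟩
      rw [UU_out hx0]
      refine tendsto_const_nhds.congr' ?_
      filter_upwards [hout x _ tendsto_const_nhds hx0] with k hk
      exact hk.symm

/-- A continuous Cauchy-type function on the half-line is affine. -/
lemma cauchy_half {f : ℝ → ℝ} (hc : Continuous fun t => f (max t 0))
    (hadd : ∀ s t, 0 ≤ s → 0 ≤ t → f (s + t) + f 0 = f s + f t) :
    ∃ c₁, ∀ t, 0 ≤ t → f t = f 0 + c₁ * t := by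
  set F : ℝ → ℝ := fun x => f (max x 0) - f (max (-x) 0) with hF
  have hpn : ∀ p q, 0 ≤ p → 0 ≤ q → F (p - q) = f p - f q := by
    intro p q hp hq
    simp only [hF]
    rcases le_total q p with h | h
    · rw [max_eq_left (by linarith), max_eq_right (by linarith)]
      have := hadd (p - q) q (by linarith) hq
      rw [sub_add_cancel] at this
      linarith
    · rw [max_eq_right (by linarith), max_eq_left (by linarith)]
      have := hadd (-(p - q)) p (by linarith) hp
      rw [show -(p - q) + p = q by ring] at this
      linarith
  have hFadd : ∀ x y, F (x + y) = F x + F y := by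
    intro x y
    have hx : x = max x 0 - max (-x) 0 := by
      rcases le_total 0 x with h | h
      · rw [max_eq_left h, max_eq_right (by linarith)]; ring
      · rw [max_eq_right h, max_eq_left (by linarith)]; ring
    have hy : y = max y 0 - max (-y) 0 := by
      rcases le_total 0 y with h | h
      · rw [max_eq_left h, max_eq_right (by linarith)]; ring
      · rw [max_eq_right h, max_eq_left (by linarith)]; ring
    have e : x + y = (max x 0 + max y 0) - (max (-x) 0 + max (-y) 0) := by linarith
    have p1 : 0 ≤ max x 0 := le_max_right _ _
    have p2 : 0 ≤ max y 0 := le_max_right _ _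
    have p3 : 0 ≤ max (-x) 0 := le_max_right _ _
    have p4 : 0 ≤ max (-y) 0 := le_max_right _ _
    have q1 := hpn _ _ (add_nonneg p1 p2) (add_nonneg p3 p4)
    rw [← e] at q1
    rw [q1]
    have := hadd _ _ p1 p2
    have := hadd _ _ p3 p4
    simp only [hF]
    linarith
  have hFc : Continuous F := hc.sub (hc.comp continuous_neg)
  let Fh : ℝ →+ ℝ := AddMonoidHom.mk' F hFadd
  refine ⟨F 1, fun t ht => ?_⟩
  have h1 : Fh (t • (1 : ℝ)) = t • Fh 1 := map_real_smul Fh hFc t 1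
  have h2 : F t = t * F 1 := by simpa [Fh] using h1
  have h3 := hpn t 0 ht le_rfl
  rw [sub_zero] at h3
  linarith

lemma max_step {Z : (ℝ → EReal) → ℝ} (hZ : IsVal Z) {c₀ c₁ L : ℝ} (hL : 0 < L) {v l : ℝ → ℝ}
    (hv : Glob v L) (hl : Glob l L) (s c : ℝ) (hls : ∀ x, l x = s * x + c)
    (Pv : ∀ a b, a ≤ b → Z (UU v a b) = c₀ + c₁ * (b - a))
    (Pl : ∀ a b, a ≤ b → Z (UU l a b) = c₀ + c₁ * (b - a)) :
    ∀ a b, a ≤ b → Z (UU (fun x => max (v x) (l x)) a b) = c₀ + c₁ * (b - a) := by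
  intro a b hab
  have hw := hv.max hl
  set w : ℝ → ℝ := fun x => max (v x) (l x) with hwdef
  set S : Set ℝ := {x ∈ Set.Icc a b | v x ≤ l x} with hS
  have hSv : ∀ x ∈ Set.Icc a b, x ∉ S → w x = v x := by
    intro x hx hxS
    simp only [hwdef]
    rw [max_eq_left]
    by_contra hcon
    exact hxS ⟨hx, (not_le.1 hcon).le⟩
  rcases S.eq_empty_or_nonempty with hemp | hne
  · rw [UU_congr (h := v) (fun x hx => hSv x hx (by rw [hemp]; simp))]
    exact Pv a b hab
  have hvc : ContinuousOn v (Set.Icc a b) := (hv.good a b).cont hL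
  have hlc : ContinuousOn l (Set.Icc a b) := (hl.good a b).cont hL
  have hcl : IsClosed S := isClosed_Icc.isClosed_le hvc hlc
  have hcomp : IsCompact S := isCompact_Icc.of_isClosed_subset hcl (fun x hx => hx.1)
  have hconv : Convex ℝ S := by
    intro x hx y hy α β hα hβ hαβ
    refine ⟨convex_Icc a b hx.1 hy.1 hα hβ hαβ, ?_⟩
    have h1 := hv.1.2 (Set.mem_univ x) (Set.mem_univ y) hα hβ hαβ
    have h2 := mul_le_mul_of_nonneg_left hx.2 hα
    have h3 := mul_le_mul_of_nonneg_left hy.2 hβ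
    rw [hls] at h2 h3 ⊢
    simp only [smul_eq_mul] at h1 ⊢
    have : c = (α + β) * c := by rw [hαβ]; ring
    nlinarith
  have hI := eq_Icc_of_connected_compact ⟨hne, hconv.isPreconnected⟩ hcomp
  set p := sInf S
  set q := sSup S
  have hpq : p ≤ q := by
    rw [hI] at hne; exact Set.nonempty_Icc.1 hne
  have hpS : p ∈ S := by rw [hI]; exact ⟨le_rfl, hpq⟩
  have hqS : q ∈ S := by rw [hI]; exact ⟨hpq, le_rfl⟩
  have hap : a ≤ p := hpS.1.1
  have hqb : q ≤ b := hqS.1.2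
  have hSl : ∀ x ∈ S, w x = l x := by
    intro x hx; exact max_eq_right hx.2
  -- endpoint equality
  have hmid : Z (UU w p q) = c₀ + c₁ * (q - p) := by
    rw [UU_congr (h := l) (fun x hx => hSl x (hI ▸ hx))]
    exact Pl p q hpq
  have hpt : ∀ x ∈ S, Z (UU w x x) = c₀ := by
    intro x hx
    rw [UU_congr (h := l) (fun y hy => by
      have : y = x := le_antisymm hy.2 hy.1
      rw [this]; exact hSl x hx), Pl x x le_rfl]
    ring
  have hleft : Z (UU w a p) = c₀ + c₁ * (p - a) := by
    rcases hap.eq_or_lt with h | h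
    · rw [← h, hpt a (h ▸ hpS)]; ring
    rw [UU_congr (h := v), Pv a p hap]
    have key : Set.EqOn w v (Set.Ico a p) := by
      intro x hx
      exact hSv x ⟨hx.1, hx.2.le.trans (hpq.trans hqb)⟩ (by rw [hI]; intro h; linarith [h.1, hx.2])
    have h2 : Set.EqOn w v (closure (Set.Ico a p)) := by
      have c1 := ((hw.good a p).cont hL)
      have c2 := ((hv.good a p).cont hL)
      exact key.of_subset_closure (by rwa [closure_Ico h.ne]) (by rwa [closure_Ico h.ne])
        subset_closure le_rfl
    rw [closure_Ico h.ne] at h2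
    exact h2
  have hright : Z (UU w q b) = c₀ + c₁ * (b - q) := by
    rcases hqb.eq_or_lt with h | h
    · rw [← h, hpt q hqS]; ring
    rw [UU_congr (h := v), Pv q b hqb]
    have key : Set.EqOn w v (Set.Ioc q b) := by
      intro x hx
      exact hSv x ⟨(hap.trans hpq).trans hx.1.le, hx.2⟩ (by rw [hI]; intro h; linarith [h.2, hx.1])
    have h2 : Set.EqOn w v (closure (Set.Ioc q b)) := by
      have c1 := ((hw.good q b).cont hL)
      have c2 := ((hv.good q b).cont hL)
      exact key.of_subset_closure (by rwa [closure_Ioc h.ne]) (by rwa [closure_Ioc h.ne])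
        subset_closure le_rfl
    rw [closure_Ioc h.ne] at h2
    exact h2
  have s1 := split_UU hZ hL hw hap (hpq.trans hqb)
  have s2 := split_UU hZ hL hw hpq hqb
  rw [hpt p hpS] at s1
  rw [hpt q hqS] at s2
  linarith

lemma support_line {g : ℝ → ℝ} {a b L : ℝ} (hg : Good g a b L) {d : ℝ}
    (hd : d ∈ Set.Ioo a b) : ∃ s, |s| ≤ L ∧ ∀ x ∈ Set.Icc a b, g d + s * (x - d) ≤ g x := by
  set A : Set ℝ := (fun x => (g d - g x) / (d - x)) '' Set.Ico a d with hA
  have hab : a < b := hd.1.trans hd.2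
  have haA : (g d - g a) / (d - a) ∈ A := ⟨a, ⟨le_rfl, hd.1⟩, rfl⟩
  have hub : ∀ y ∈ Set.Ioc d b, ∀ z ∈ A, z ≤ (g y - g d) / (y - d) := by
    rintro y hy z ⟨x, hx, rfl⟩
    exact hg.1.slope_mono_adjacent ⟨hx.1, hx.2.le.trans hd.2.le⟩
      ⟨hd.1.le.trans hy.1.le, hy.2⟩ hx.2 hy.1
  have hbdd : BddAbove A := ⟨_, hub b ⟨hd.2, le_rfl⟩⟩
  have hsup : ∀ x ∈ Set.Icc a b, g d + sSup A * (x - d) ≤ g x := by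
    intro x hx
    rcases lt_trichotomy x d with h | h | h
    · have := le_csSup hbdd (show (g d - g x) / (d - x) ∈ A from ⟨x, ⟨hx.1, h⟩, rfl⟩)
      rw [div_le_iff₀ (by linarith)] at this
      linarith
    · subst h; simp
    · have := csSup_le ⟨_, haA⟩ (hub x ⟨h, hx.2⟩)
      rw [le_div_iff₀ (by linarith)] at this
      linarith
  refine ⟨sSup A, ?_, hsup⟩
  have hdI : d ∈ Set.Icc a b := Set.Ioo_subset_Icc_self hd
  have haI : a ∈ Set.Icc a b := ⟨le_rfl, hab.le⟩
  have hbI : b ∈ Set.Icc a b := ⟨hab.le, le_rfl⟩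
  have h1 := hsup a haI
  have h2 := hsup b hbI
  have h3 := (abs_le.1 (hg.2 a haI d hdI)).2
  have h4 := (abs_le.1 (hg.2 b hbI d hdI)).2
  rw [abs_of_neg (by linarith [hd.1])] at h3
  rw [abs_of_pos (by linarith [hd.2])] at h4
  rw [abs_le]
  constructor
  · have : (-L) * (d - a) ≤ sSup A * (d - a) := by linarith
    exact le_of_mul_le_mul_right this (by linarith [hd.1])
  · have : sSup A * (b - d) ≤ L * (b - d) := by linarith
    exact le_of_mul_le_mul_right this (by linarith [hd.2])

/-- Running maximum of a sequence of affine functions. -/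
def runMax (s c : ℕ → ℝ) : ℕ → ℝ → ℝ
  | 0 => fun x => s 0 * x + c 0
  | n + 1 => fun x => max (runMax s c n x) (s (n + 1) * x + c (n + 1))

lemma le_runMax (s c : ℕ → ℝ) (i n : ℕ) (h : i ≤ n) (x : ℝ) : s i * x + c i ≤ runMax s c n x := by
  induction n with
  | zero => obtain rfl : i = 0 := by omega
            exact le_rfl
  | succ n ih =>
    rcases Nat.le_succ_iff.1 h with h | rfl
    · exact (ih h).trans (le_max_left _ _)
    · exact le_max_right _ _

lemma runMax_le (s c : ℕ → ℝ) (n : ℕ) (x y : ℝ) (h : ∀ i, s i * x + c i ≤ y) :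
    runMax s c n x ≤ y := by
  induction n with
  | zero => exact h 0
  | succ n ih => exact max_le ih (h _)

lemma glob_runMax (s c : ℕ → ℝ) {L : ℝ} (hs : ∀ i, |s i| ≤ L) (n : ℕ) : Glob (runMax s c n) L := by
  induction n with
  | zero => exact glob_affine (hs 0) _
  | succ n ih => exact ih.max (glob_affine (hs _) _)

lemma hard_dir (Z : (ℝ → EReal) → ℝ) (hZ : IsVal Z) (hC : TauCont Z) (hT : TransInv Z)
    (hD : DualTransInv Z) : ∃ c₀ c₁ : ℝ, ∀ u : ℝ → EReal, IsLC u →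
      Z u = c₀ + c₁ * (volume (edom u)).toReal := by
  obtain ⟨c₁, hf⟩ := cauchy_half (f := fun t => Z (UU (fun _ => 0) 0 t)) (cont_f hC) (by
    intro s t hs ht
    have h := split_UU hZ one_pos glob_zero (a := 0) (c := s) (b := s + t) hs (by linarith)
    rw [Z_shift hT le_rfl, Z_shift hT (by linarith : s ≤ s + t), sub_self,
      add_sub_cancel_left] at h
    exact h)
  set c₀ := Z (UU (fun _ => 0) 0 0) with hc₀
  beta_reduce at hf
  have hflat : ∀ (s c a b : ℝ), a ≤ b → Z (UU (fun x => s * x + c) a b) = c₀ + c₁ * (b - a) := by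
    intro s c a b hab
    rw [Z_affine hD hab, Z_shift hT hab, hf _ (by linarith)]
  refine ⟨c₀, c₁, fun u hu => ?_⟩
  obtain ⟨L, hL, hlip⟩ := hu.2.2.2.2.2
  obtain ⟨a, b, g, hab, rfl, hg⟩ := exists_UU hu
  have hg := hg L hL hlip
  rw [vol_UU hab]
  rcases hab.eq_or_lt with h | hab'
  · subst h
    rw [UU_congr (h := fun x => 0 * x + g a)]
    · exact hflat _ _ _ _ le_rfl
    · intro x hx
      rw [le_antisymm hx.2 hx.1]; ring
  have hsup : ∀ d : ℝ, ∃ s c, |s| ≤ L ∧ (∀ x ∈ Set.Icc a b, s * x + c ≤ g x) ∧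
      (d ∈ Set.Ioo a b → s * d + c = g d) := by
    intro d
    by_cases hd : d ∈ Set.Ioo a b
    · obtain ⟨s, hs, hx⟩ := support_line hg hd
      exact ⟨s, g d - s * d, hs, fun x hxI => by linarith [hx x hxI], fun _ => by ring⟩
    · have hm : (a + b) / 2 ∈ Set.Ioo a b := ⟨by linarith, by linarith⟩
      obtain ⟨s, hs, hx⟩ := support_line hg hm
      exact ⟨s, g ((a + b) / 2) - s * ((a + b) / 2), hs, fun x hxI => by linarith [hx x hxI],
        fun h => absurd h hd⟩
  choose S C hS hle heq using hsup
  set D := TopologicalSpace.denseSeq ℝ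
  set v := runMax (fun i => S (D i)) (fun i => C (D i)) with hvdef
  have hvG : ∀ n, Glob (v n) L := fun n => glob_runMax _ _ (fun i => hS (D i)) n
  have hvle : ∀ n, ∀ x ∈ Set.Icc a b, v n x ≤ g x := fun n x hx =>
    runMax_le _ _ n x _ (fun i => hle (D i) x hx)
  have hvP : ∀ n, ∀ a b, a ≤ b → Z (UU (v n) a b) = c₀ + c₁ * (b - a) := by
    intro n
    induction n with
    | zero => exact hflat _ _
    | succ n ih =>
      exact max_step hZ hL (hvG n) (glob_affine (hS (D (n + 1))) (C (D (n + 1)))) _ _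
        (fun x => rfl) ih (hflat _ _)
  have hconv : ∀ x ∈ Set.Icc a b, Tendsto (fun n => v n x) atTop (𝓝 (g x)) := by
    intro x hx
    rw [Metric.tendsto_atTop]
    intro ε hε
    have hcl : x ∈ closure (Set.Ioo a b) := by rw [closure_Ioo hab'.ne]; exact hx
    obtain ⟨z, hz, hz2⟩ := mem_closure_iff_nhds.1 hcl _
      (Metric.ball_mem_nhds x (show 0 < ε / (2 * L) by positivity))
    have hop : IsOpen (Metric.ball x (ε / (2 * L)) ∩ Set.Ioo a b) :=
      Metric.isOpen_ball.inter isOpen_Ioo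
    obtain ⟨i, hi⟩ := (TopologicalSpace.denseRange_denseSeq ℝ).exists_mem_open hop ⟨z, hz, hz2⟩
    change D i ∈ _ at hi
    refine ⟨i, fun n hn => ?_⟩
    have h1 : S (D i) * x + C (D i) ≤ v n x :=
      le_runMax (fun i => S (D i)) (fun i => C (D i)) i n hn x
    have h2 := hvle n x hx
    have h3 := heq (D i) hi.2
    have h4 := (abs_le.1 (hg.2 x hx (D i) (Set.Ioo_subset_Icc_self hi.2))).2
    have h5 : |D i - x| < ε / (2 * L) := hi.1
    rw [abs_sub_comm, lt_div_iff₀ (by positivity)] at h5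
    have h6 : |S (D i) * (x - D i)| ≤ L * |x - D i| := by
      rw [abs_mul]; exact mul_le_mul_of_nonneg_right (hS _) (abs_nonneg _)
    have h7 := (abs_le.1 h6).1
    rw [Real.dist_eq, abs_lt]
    constructor <;> nlinarith
  have hout : ∀ (x : ℝ) (xk : ℕ → ℝ), Tendsto xk atTop (𝓝 x) → x ∉ Set.Icc a b →
      ∀ᶠ k in atTop, UU (v k) a b (xk k) = ⊤ := by
    intro x xk hx hx0
    filter_upwards [hx.eventually (isClosed_Icc.isOpen_compl.mem_nhds hx0)] with k hk
    exact UU_out hk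
  have htau : TauConv (fun n => UU (v n) a b) (UU g a b) := by
    refine ⟨fun k => (hvG k).isLC hL hab, hu, ?_, ?_, L, hL,
      fun k => lipBound_UU ((hvG k).good _ _)⟩
    · intro x xk hx
      by_cases hx0 : x ∈ Set.Icc a b
      · rw [UU_in hx0]
        refine le_of_forall_lt fun y hy => ?_
        obtain ⟨y', hy1, hy2⟩ := exists_between hy
        refine lt_of_lt_of_le hy1 (le_liminf_of_le (by isBoundedDefault) ?_)
        have t1 : Tendsto (fun k => v k x - L * |xk k - x|) atTop (𝓝 (g x)) := by
          have e1 : Tendsto (fun k => L * |xk k - x|) atTop (𝓝 (L * |x - x|)) :=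
            ((hx.sub_const x).abs).const_mul L
          have := (hconv x hx0).sub e1
          simpa using this
        have t2 := (continuous_coe_real_ereal.tendsto _).comp t1
        filter_upwards [t2.eventually (lt_mem_nhds hy2)] with k hk
        by_cases hxk : xk k ∈ Set.Icc a b
        · rw [UU_in hxk]
          refine hk.le.trans ?_
          have := (abs_le.1 ((hvG k).2 (xk k) x)).1
          simp only [Function.comp]
          exact_mod_cast (by linarith : v k x - L * |xk k - x| ≤ v k (xk k))
        · rw [UU_out hxk]; exact le_top
      · refine le_liminf_of_le (by isBoundedDefault) ?_
        filter_upwards [hout x xk hx hx0] with k hk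
        rw [hk]; exact le_top
    · intro x
      refine ⟨fun _ => x, tendsto_const_nhds, ?_⟩
      by_cases hx0 : x ∈ Set.Icc a b
      · simp only [UU_in hx0]
        exact (continuous_coe_real_ereal.tendsto _).comp (hconv x hx0)
      · simp only [UU_out hx0]
        exact tendsto_const_nhds
  have hlim := hC _ _ htau
  have e : (fun k => Z (UU (v k) a b)) = fun _ => c₀ + c₁ * (b - a) := by
    funext k; exact hvP k a b hab
  rw [e] at hlim
  exact tendsto_nhds_unique hlim tendsto_const_nhds

/-- A functional `Z : LC(ℝ) → ℝ` is a τ-continuous, translation invariant and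
dually epi-translation invariant valuation if and only if there exist constants `c₀, c₁ ∈ ℝ`
such that `Z u = c₀ + c₁ ⬝ V₁(dom u)` for every `u ∈ LC(ℝ)`. -/
theorem stmt1 (Z : (ℝ → EReal) → ℝ) :
    (IsVal Z ∧ TauCont Z ∧ TransInv Z ∧ DualTransInv Z) ↔
    ∃ c₀ c₁ : ℝ, ∀ u : ℝ → EReal, IsLC u →
      Z u = c₀ + c₁ * (volume (edom u)).toReal := by
  constructor
  · rintro ⟨h1, h2, h3, h4⟩
    exact hard_dir Z h1 h2 h3 h4
  · rintro ⟨c₀, c₁, h⟩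
    exact easy_dir Z c₀ c₁ h

end
end

section
/- The functional Z : LC(ℝⁿ) → ℝ defined by Z(u) = V_n(dom u) is τ-continuous: if a sequence u_k in LC(ℝⁿ) τ-converges to u ∈ LC(ℝⁿ), then V_n(dom u_k) → V_n(dom u) as k → +∞. -/
open MeasureTheory Filter Topology Pointwise Asymptotics

noncomputable section

variable {E : Type*} [NormedAddCommGroup E] [NormedSpace ℝ E]

/- AUTOHELP: helper lemmas -/

theorem IsLC.convex {u : E → EReal} (h : IsLC u) : Convex ℝ (edom u) := by
  rw [convex_iff_forall_pos]
  intro x hx y hy a b ha hb hab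
  have hb' : b = 1 - a := by linarith
  have hc := h.1 x y a ha (by linarith)
  subst hb'
  refine lt_of_le_of_lt hc ?_
  have hx' : u x < ⊤ := hx
  have hy' : u y < ⊤ := hy
  lift u x to ℝ using ⟨hx'.ne, h.2.2.1 x⟩ with p
  lift u y to ℝ using ⟨hy'.ne, h.2.2.1 y⟩ with q
  rw [← EReal.coe_mul, ← EReal.coe_mul, ← EReal.coe_add]
  exact EReal.coe_lt_top _

/-- Lipschitz estimate between an interior point and an arbitrary point of the domain. -/
theorem IsLC.lip_le {u : E → EReal} (h : IsLC u) {M : ℝ} (hM : LipBound u M) {z x : E}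
    (hz : z ∈ interior (edom u)) (hx : x ∈ edom u) :
    (u z).toReal ≤ (u x).toReal + M * ‖z - x‖ := by
  have hw : (1/2 : ℝ) • z + (1 - 1/2 : ℝ) • x ∈ interior (edom u) :=
    h.convex.combo_interior_self_mem_interior hz hx (by norm_num) (by norm_num) (by norm_num)
  have hl := hM z hz _ hw
  have hc := h.1 z x (1/2) (by norm_num) (by norm_num)
  have hzx : z - ((1/2 : ℝ) • z + (1 - 1/2 : ℝ) • x) = (1/2 : ℝ) • (z - x) := by module
  rw [hzx, norm_smul] at hl
  have hz' : u z < ⊤ := (interior_subset hz : _ ∈ edom _)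
  have hx' : u x < ⊤ := hx
  have hw' : u ((1/2 : ℝ) • z + (1 - 1/2 : ℝ) • x) < ⊤ := (interior_subset hw : _ ∈ edom _)
  have hwb := h.2.2.1 ((1/2 : ℝ) • z + (1 - 1/2 : ℝ) • x)
  have hzb := h.2.2.1 z
  have hxb := h.2.2.1 x
  generalize u ((1/2 : ℝ) • z + (1 - 1/2 : ℝ) • x) = a at *
  generalize u z = b at *
  generalize u x = c at *
  lift a to ℝ using ⟨hw'.ne, hwb⟩
  lift b to ℝ using ⟨hz'.ne, hzb⟩
  lift c to ℝ using ⟨hx'.ne, hxb⟩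
  rw [← EReal.coe_mul, ← EReal.coe_mul, ← EReal.coe_add, EReal.coe_le_coe_iff] at hc
  simp only [EReal.toReal_coe] at hl ⊢
  have := (abs_le.1 hl).2
  norm_num at this hc
  linarith

theorem exists_support {n : ℕ} {K : Set (EuclideanSpace ℝ (Fin n))} (hK : Convex ℝ K)
    (hc : IsClosed K) (hne : K.Nonempty) {x : EuclideanSpace ℝ (Fin n)} (hx : x ∉ interior K)
    {ε : ℝ} (hε : 0 < ε) : ∃ x' v : EuclideanSpace ℝ (Fin n), dist x' x < ε ∧ ‖v‖ = 1 ∧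
      ∀ y ∈ K, inner ℝ v y ≤ inner ℝ v x' := by
  have h1 : ∃ x', dist x' x < ε ∧ x' ∉ K := by
    by_contra! hcon
    exact hx (mem_interior_iff_mem_nhds.2 (Metric.mem_nhds_iff.2 ⟨ε, hε, fun y hy => hcon y hy⟩))
  obtain ⟨x', hd, hx'⟩ := h1
  obtain ⟨f, s, hf1, hf2⟩ := geometric_hahn_banach_closed_point hK hc hx'
  set w := (InnerProductSpace.toDual ℝ (EuclideanSpace ℝ (Fin n))).symm f with hw
  have hwf : ∀ y, inner ℝ w y = f y := fun y => InnerProductSpace.toDual_symm_apply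
  obtain ⟨y0, hy0⟩ := hne
  have hw0 : w ≠ 0 := by
    intro h0
    have e1 := hwf y0
    have e2 := hwf x'
    rw [h0, inner_zero_left] at e1 e2
    have := hf1 y0 hy0
    linarith
  refine ⟨x', ‖w‖⁻¹ • w, hd, ?_, ?_⟩
  · rw [norm_smul, norm_inv, norm_norm, inv_mul_cancel₀ (norm_ne_zero_iff.2 hw0)]
  · intro y hy
    rw [real_inner_smul_left, real_inner_smul_left, hwf, hwf]
    exact mul_le_mul_of_nonneg_left ((hf1 y hy).trans hf2).le (by positivity)

theorem IsLC.nonempty {u : E → EReal} (h : IsLC u) : (edom u).Nonempty := by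
  obtain ⟨x, hx⟩ := h.2.2.2.1
  exact ⟨x, lt_top_iff_ne_top.2 hx⟩

theorem TauConv.recovery {uk : ℕ → E → EReal} {u : E → EReal} (h : TauConv uk u) {x : E}
    (hx : x ∈ edom u) : ∃ xk : ℕ → E, Tendsto xk atTop (𝓝 x) ∧ ∀ᶠ k in atTop,
      xk k ∈ edom (uk k) ∧ (uk k (xk k)).toReal ≤ (u x).toReal + 1 := by
  obtain ⟨xk, h1, h2⟩ := h.2.2.2.1 x
  refine ⟨xk, h1, ?_⟩
  have hx' : u x < ⊤ := hx
  have hb := h.2.1.2.2.1 x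
  have h3 := (EReal.tendsto_toReal hx'.ne hb).comp h2
  filter_upwards [h2.eventually_lt_const hx', h3.eventually_le_const (lt_add_one _)] with k a b
  exact ⟨a, b⟩

theorem inner_limit {n : ℕ} {uk : ℕ → EuclideanSpace ℝ (Fin n) → EReal}
    {u : EuclideanSpace ℝ (Fin n) → EReal} (h : TauConv uk u) {x : EuclideanSpace ℝ (Fin n)}
    (hx : x ∈ interior (edom u)) : ∀ᶠ k in atTop, x ∈ interior (edom (uk k)) := by
  by_contra hcon
  obtain ⟨φ, hφ, hP⟩ := extraction_of_frequently_atTop (not_eventually.1 hcon)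
  have hs : ∀ j : ℕ, ∃ x' v : EuclideanSpace ℝ (Fin n), dist x' x < 1 / ((j : ℝ) + 1) ∧ ‖v‖ = 1 ∧
      ∀ y ∈ edom (uk (φ j)), inner ℝ v y ≤ inner ℝ v x' := fun j =>
    exists_support (h.1 _).convex (h.1 _).2.2.2.2.1.isClosed (h.1 _).nonempty (hP j)
      Nat.one_div_pos_of_nat
  choose x' v hd hv hin using hs
  have hx' : Tendsto x' atTop (𝓝 x) := by
    rw [tendsto_iff_dist_tendsto_zero]
    exact squeeze_zero (fun _ => dist_nonneg) (fun j => (hd j).le)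
      tendsto_one_div_add_atTop_nhds_zero_nat
  obtain ⟨w, -, ψ, hψ, hw⟩ := tendsto_subseq_of_bounded
    (Metric.isBounded_closedBall (x := (0 : EuclideanSpace ℝ (Fin n))) (r := 1)) (x := v)
    (fun j => by simp [hv j])
  have hw1 : ‖w‖ = 1 := by
    refine tendsto_nhds_unique hw.norm ?_
    simp [hv]
  obtain ⟨ε, hε, hball⟩ := Metric.mem_nhds_iff.1 (mem_interior_iff_mem_nhds.1 hx)
  have hy : x + (ε / 2) • w ∈ edom u := by
    apply hball
    rw [Metric.mem_ball, dist_eq_norm, add_sub_cancel_left, norm_smul, hw1, Real.norm_eq_abs,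
      abs_of_pos (by positivity)]
    linarith
  obtain ⟨yk, hyk, hev⟩ := h.recovery hy
  have hφψ : Tendsto (φ ∘ ψ) atTop atTop := (hφ.comp hψ).tendsto_atTop
  have l1 : Tendsto (fun j => inner ℝ (v (ψ j)) (yk (φ (ψ j)))) atTop
      (𝓝 (inner ℝ w (x + (ε / 2) • w))) := Filter.Tendsto.inner hw (hyk.comp hφψ)
  have l2 : Tendsto (fun j => inner ℝ (v (ψ j)) (x' (ψ j))) atTop
      (𝓝 (inner ℝ w x)) := Filter.Tendsto.inner hw (hx'.comp hψ.tendsto_atTop)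
  have hle := le_of_tendsto_of_tendsto l1 l2 ((hφψ.eventually hev).mono
    fun j hj => hin (ψ j) _ hj.1)
  rw [inner_add_right, real_inner_smul_right, real_inner_self_eq_norm_sq, hw1] at hle
  linarith

/-- Limits of interior points of the domains along a subsequence lie in the limit domain. -/
theorem outer_limit {uk : ℕ → E → EReal} {u : E → EReal} (h : TauConv uk u) {z : ℕ → E} {w : E}
    {φ : ℕ → ℕ} (hφ : StrictMono φ) (hz : ∀ᶠ j in atTop, z (φ j) ∈ interior (edom (uk (φ j))))
    (hw : Tendsto (z ∘ φ) atTop (𝓝 w)) : w ∈ edom u := by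
  classical
  by_contra hnot
  have htop : u w = ⊤ := by simpa [edom] using hnot
  obtain ⟨x0, hx0⟩ := h.2.1.nonempty
  obtain ⟨xk, hxk, hev⟩ := h.recovery hx0
  obtain ⟨M, hM0, hM⟩ := h.2.2.2.2
  let y : ℕ → E := fun k => if k ∈ Set.range φ then z k else w
  have hy : Tendsto y atTop (𝓝 w) := by
    rw [Metric.tendsto_atTop] at hw ⊢
    intro ε hε
    obtain ⟨N, hN⟩ := hw ε hε
    refine ⟨φ N, fun k hk => ?_⟩
    by_cases hkr : k ∈ Set.range φ
    · obtain ⟨j, rfl⟩ := hkr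
      simpa [y] using hN j (hφ.le_iff_le.1 hk)
    · have hyk : y k = w := if_neg hkr
      rw [hyk, dist_self]
      exact hε
  set C : ℝ := (u x0).toReal + 1 + M * (‖w - x0‖ + 1) with hC
  have hlim := h.2.2.1 w y hy
  have hlt : (C : EReal) < liminf (fun k => uk k (y k)) atTop := by
    rw [htop] at hlim
    exact lt_of_lt_of_le (EReal.coe_lt_top C) hlim
  have hbig := hφ.tendsto_atTop.eventually (eventually_lt_of_lt_liminf hlt)
  have hn : Tendsto (fun j => ‖z (φ j) - xk (φ j)‖) atTop (𝓝 ‖w - x0‖) :=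
    (hw.sub (hxk.comp hφ.tendsto_atTop)).norm
  obtain ⟨j, h1, h2, h3, h4⟩ := (hbig.and ((hφ.tendsto_atTop.eventually hev).and
    (hz.and (hn.eventually_le_const (lt_add_one _))))).exists
  have hyj : y (φ j) = z (φ j) := by simp [y]
  rw [hyj] at h1
  have hl := (h.1 (φ j)).lip_le (hM (φ j)) h3 h2.1
  have hf : uk (φ j) (z (φ j)) < ⊤ := (interior_subset h3 : _ ∈ edom _)
  have hfb := (h.1 (φ j)).2.2.1 (z (φ j))
  rw [← EReal.coe_toReal hf.ne hfb, EReal.coe_lt_coe_iff] at h1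
  have := mul_le_mul_of_nonneg_left h4 hM0.le
  linarith [h2.2]

theorem bounded_interiors {n : ℕ} {uk : ℕ → EuclideanSpace ℝ (Fin n) → EReal}
    {u : EuclideanSpace ℝ (Fin n) → EReal} (h : TauConv uk u) :
    ∃ B : Set (EuclideanSpace ℝ (Fin n)), IsCompact B ∧
      ∀ᶠ k in atTop, interior (edom (uk k)) ⊆ B := by
  classical
  obtain ⟨x0, hx0⟩ := h.2.1.nonempty
  obtain ⟨xk, hxk, hev⟩ := h.recovery hx0
  obtain ⟨R, hR0, hR⟩ := h.2.1.2.2.2.2.1.isBounded.subset_closedBall_lt 0 x0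
  refine ⟨Metric.closedBall x0 (R + 2), isCompact_closedBall _ _, ?_⟩
  have hnear : ∀ᶠ k in atTop, dist (xk k) x0 < 1 := Metric.tendsto_nhds.1 hxk 1 one_pos
  by_contra hcon
  obtain ⟨φ, hφ, hP⟩ := extraction_of_frequently_atTop
    ((not_eventually.1 hcon).and_eventually (hev.and hnear))
  have key : ∀ k, ∃ p, (¬ interior (edom (uk k)) ⊆ Metric.closedBall x0 (R + 2) ∧
      (xk k ∈ edom (uk k) ∧ (uk k (xk k)).toReal ≤ (u x0).toReal + 1) ∧ dist (xk k) x0 < 1) →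
      p ∈ interior (edom (uk k)) ∧ ‖p - xk k‖ = R + 1 := by
    intro k
    by_cases hk : (¬ interior (edom (uk k)) ⊆ Metric.closedBall x0 (R + 2) ∧
      (xk k ∈ edom (uk k) ∧ (uk k (xk k)).toReal ≤ (u x0).toReal + 1) ∧ dist (xk k) x0 < 1)
    · obtain ⟨a, b, c⟩ := hk
      obtain ⟨q, hq, hqn⟩ := Set.not_subset.1 a
      rw [Metric.mem_closedBall, not_le] at hqn
      have hqd : R + 1 < ‖q - xk k‖ := by
        have := dist_triangle q (xk k) x0
        rw [← dist_eq_norm]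
        linarith
      have hpos : 0 < ‖q - xk k‖ := by linarith
      have hs1 : (R + 1) / ‖q - xk k‖ ≤ 1 := (div_le_one hpos).2 hqd.le
      refine ⟨((R + 1) / ‖q - xk k‖) • q + (1 - (R + 1) / ‖q - xk k‖) • xk k, fun _ => ⟨?_, ?_⟩⟩
      · exact (h.1 k).convex.combo_interior_self_mem_interior hq b.1 (by positivity)
          (by linarith) (by ring)
      · have : ((R + 1) / ‖q - xk k‖) • q + (1 - (R + 1) / ‖q - xk k‖) • xk k - xk k
            = ((R + 1) / ‖q - xk k‖) • (q - xk k) := by module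
        rw [this, norm_smul, Real.norm_eq_abs, abs_of_pos (by positivity),
          div_mul_cancel₀ _ hpos.ne']
    · exact ⟨0, fun hk' => absurd hk' hk⟩
  choose p hp using key
  have hpb : ∀ j, p (φ j) ∈ Metric.closedBall x0 (R + 2) := by
    intro j
    have h1 := (hp _ (hP j)).2
    have h2 := (hP j).2.2
    have h3 := dist_triangle (p (φ j)) (xk (φ j)) x0
    rw [← dist_eq_norm] at h1
    rw [Metric.mem_closedBall]
    linarith
  obtain ⟨w, -, ψ, hψ, hw⟩ := tendsto_subseq_of_bounded Metric.isBounded_closedBall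
    (x := fun j => p (φ j)) hpb
  have hφψ : StrictMono (φ ∘ ψ) := hφ.comp hψ
  have hwd : w ∈ edom u := outer_limit h (z := p) hφψ
    (Eventually.of_forall fun j => (hp _ (hP (ψ j))).1) hw
  have hn : ‖w - x0‖ = R + 1 := by
    have l : Tendsto (fun j => ‖p (φ (ψ j)) - xk (φ (ψ j))‖) atTop (𝓝 ‖w - x0‖) :=
      (hw.sub (hxk.comp hφψ.tendsto_atTop)).norm
    refine tendsto_nhds_unique l ?_
    have : (fun j => ‖p (φ (ψ j)) - xk (φ (ψ j))‖) = fun _ => R + 1 :=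
      funext fun j => (hp _ (hP (ψ j))).2
    rw [this]
    exact tendsto_const_nhds
  have := hR hwd
  rw [Metric.mem_closedBall, dist_eq_norm] at this
  linarith

/-- The functional `Z(u) = V_n(dom u)` is τ-continuous on `LC(ℝⁿ)`:
if `u_k` τ-converges to `u` then `V_n(dom u_k) → V_n(dom u)`. -/
theorem stmt5 (n : ℕ) (uk : ℕ → EuclideanSpace ℝ (Fin n) → EReal)
    (u : EuclideanSpace ℝ (Fin n) → EReal) (h : TauConv uk u) :
    Tendsto (fun k => (volume (edom (uk k))).toReal) atTop
      (𝓝 ((volume (edom u)).toReal)) := by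
  obtain ⟨B, hB, hsub⟩ := bounded_interiors h
  have hfr : ∀ v : EuclideanSpace ℝ (Fin n) → EReal, IsLC v →
      volume (frontier (edom v)) = 0 := fun v hv => hv.convex.addHaar_frontier volume
  have hmain : Tendsto (fun k => volume (interior (edom (uk k)))) atTop
      (𝓝 (volume (interior (edom u)))) := by
    refine tendsto_measure_of_ae_tendsto_indicator atTop isOpen_interior.measurableSet
      (fun k => isOpen_interior.measurableSet) hB.measurableSet hB.measure_lt_top.ne hsub ?_
    have hae : ∀ᵐ x ∂(volume : Measure (EuclideanSpace ℝ (Fin n))), x ∉ frontier (edom u) :=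
      measure_eq_zero_iff_ae_notMem.1 (hfr u h.2.1)
    filter_upwards [hae] with x hx
    by_cases hxi : x ∈ interior (edom u)
    · filter_upwards [inner_limit h hxi] with k hk
      simp [hk, hxi]
    · have hxd : x ∉ edom u := fun hxd => hx ⟨subset_closure hxd, hxi⟩
      have hev : ∀ᶠ k in atTop, x ∉ interior (edom (uk k)) := by
        by_contra hcon
        obtain ⟨φ, hφ, hP⟩ := extraction_of_frequently_atTop (not_eventually.1 hcon)
        exact hxd (outer_limit h (z := fun _ => x) hφ
          (Eventually.of_forall fun j => not_not.1 (hP j)) tendsto_const_nhds)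
      filter_upwards [hev] with k hk
      simp [hk, hxi]
  rw [measure_interior_of_null_frontier (hfr u h.2.1)] at hmain
  have hmain' : Tendsto (fun k => volume (edom (uk k))) atTop (𝓝 (volume (edom u))) := by
    refine hmain.congr fun k => ?_
    exact measure_interior_of_null_frontier (hfr _ (h.1 k))
  exact (ENNReal.tendsto_toReal h.2.1.2.2.2.2.1.measure_lt_top.ne).comp hmain'

end
end

section
/- Let Z : LC(ℝⁿ) → ℝ be a simple, τ-upper semicontinuous valuation that is SL_n(ℝ) invariant, translation invariant and dually epi-translation invariant. Then there exists a constant c₁ ∈ ℝ such that Z(I_P) = c₁·V_n(P) for every polytope P ⊂ ℝⁿ. -/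
open MeasureTheory Filter Topology Pointwise Asymptotics

noncomputable section

variable {E : Type*} [NormedAddCommGroup E] [NormedSpace ℝ E]

/-- A polytope: the convex hull of a nonempty finite set of points. -/
def IsPolytope {F : Type*} [AddCommGroup F] [Module ℝ F] (P : Set F) : Prop :=
  ∃ s : Finset F, s.Nonempty ∧ P = convexHull ℝ (s : Set F)


set_option linter.unusedSectionVars false

/-! ### Indicator functions of convex bodies -/

lemma edom_ind (K : Set E) : edom (eIndicator K) = K := by
  ext x
  by_cases h : x ∈ K <;> simp [edom, eIndicator, h]

lemma isLC_ind {K : Set E} (hK : IsCompact K) (hc : Convex ℝ K) (hne : K.Nonempty) :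
    IsLC (eIndicator K) := by
  refine ⟨?_, ?_, ?_, ?_, ?_, 1, one_pos, ?_⟩
  · intro x y t h0 h1
    have h1' : (0:ℝ) < 1 - t := by linarith
    by_cases hx : x ∈ K
    · by_cases hy : y ∈ K
      · have : t • x + (1 - t) • y ∈ K := hc hx hy h0.le h1'.le (by ring)
        simp [eIndicator, hx, hy, this]
      · have : ((1 - t : ℝ) : EReal) * ⊤ = ⊤ := EReal.coe_mul_top_of_pos h1'
        simp only [eIndicator, hx, hy, if_true, if_false, this]
        simp
    · have : ((t : ℝ) : EReal) * ⊤ = ⊤ := EReal.coe_mul_top_of_pos h0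
      have h2 : ((1 - t : ℝ) : EReal) * ⊤ = ⊤ := EReal.coe_mul_top_of_pos h1'
      by_cases hy : y ∈ K
      · simp only [eIndicator, hx, hy, if_true, if_false, this]
        simp
      · simp only [eIndicator, hx, hy, if_false, this, h2]
        simp
  · intro x y hy
    by_cases hx : x ∈ K
    · simp only [eIndicator, hx, if_true] at hy
      refine Eventually.of_forall fun z => ?_
      by_cases hz : z ∈ K
      · simpa [eIndicator, hz] using hy
      · simp only [eIndicator, hz, if_false]
        exact hy.trans_le le_top
    · filter_upwards [hK.isClosed.isOpen_compl.mem_nhds hx] with z hz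
      have hz : z ∉ K := hz
      simpa [eIndicator, hz, hx] using hy
  · intro x
    by_cases hx : x ∈ K <;> simp [eIndicator, hx]
  · obtain ⟨x, hx⟩ := hne
    exact ⟨x, by simp [eIndicator, hx]⟩
  · rwa [edom_ind]
  · intro x hx y hy
    rw [edom_ind] at hx hy
    have hx := interior_subset hx
    have hy := interior_subset hy
    simp [eIndicator, hx, hy]

lemma ind_union (K L : Set E) :
    (fun x => min (eIndicator K x) (eIndicator L x)) = eIndicator (K ∪ L) := by
  funext x
  by_cases h : x ∈ K <;> by_cases h' : x ∈ L <;> simp [eIndicator, h, h']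

lemma ind_inter (K L : Set E) :
    (fun x => max (eIndicator K x) (eIndicator L x)) = eIndicator (K ∩ L) := by
  funext x
  by_cases h : x ∈ K <;> by_cases h' : x ∈ L <;> simp [eIndicator, h, h']

/-- τ-convergence of dilates. -/
lemma tau_dilate {K : Set E} (hK : IsCompact K) (hc : Convex ℝ K) (hne : K.Nonempty)
    (r : ℕ → ℝ) (hr : ∀ k, 0 < r k) (hlim : Tendsto r atTop (𝓝 1)) :
    TauConv (fun k => eIndicator (r k • K)) (eIndicator K) := by
  have hLC : ∀ k, IsLC (eIndicator (r k • K)) := fun k =>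
    isLC_ind (hK.smul _) (hc.smul _) (hne.smul_set)
  refine ⟨hLC, isLC_ind hK hc hne, ?_, ?_, 1, one_pos, ?_⟩
  · intro x xk hxk
    have hinv : Tendsto (fun k => (r k)⁻¹ • xk k) atTop (𝓝 x) := by
      have := (hlim.inv₀ one_ne_zero).smul hxk
      simpa using this
    by_cases hx : x ∈ K
    · simp only [eIndicator, hx, if_true]
      refine le_liminf_of_le (by isBoundedDefault) (Eventually.of_forall fun k => ?_)
      split_ifs <;> simp
    · have hev : ∀ᶠ k in atTop, eIndicator (r k • K) (xk k) = ⊤ := by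
        filter_upwards [hinv.eventually (hK.isClosed.isOpen_compl.mem_nhds hx)] with k hk
        have : xk k ∉ r k • K := by
          rw [Set.mem_smul_set_iff_inv_smul_mem₀ (hr k).ne']
          exact hk
        simp [eIndicator, this]
      rw [liminf_congr hev]
      simp
  · intro x
    refine ⟨fun k => r k • x, by simpa using hlim.smul_const x, ?_⟩
    have : ∀ k, eIndicator (r k • K) (r k • x) = eIndicator K x := by
      intro k
      have : r k • x ∈ r k • K ↔ x ∈ K := Set.smul_mem_smul_set_iff₀ (hr k).ne' _ _
      by_cases hx : x ∈ K
      · simp only [eIndicator, hx, this.2 hx, if_true]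
      · simp only [eIndicator, hx, mt this.1 hx, if_false]
    simp [this]
  · intro k x hx y hy
    rw [edom_ind] at hx hy
    have hx := interior_subset hx
    have hy := interior_subset hy
    simp [eIndicator, hx, hy]

/-- Closed half space. -/
def hs (h : E →ᵃ[ℝ] ℝ) : Set E := {x | 0 ≤ h x}

lemma hs_convex (h : E →ᵃ[ℝ] ℝ) : Convex ℝ (hs h) :=
  (convex_Ici (0:ℝ)).affine_preimage h

lemma hs_closed [FiniteDimensional ℝ E] (h : E →ᵃ[ℝ] ℝ) : IsClosed (hs h) :=
  isClosed_le continuous_const h.continuous_of_finiteDimensional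

lemma hs_univ (h : E →ᵃ[ℝ] ℝ) : hs h ∪ hs (-h) = Set.univ := by
  ext x
  simp only [hs, Set.mem_union, Set.mem_ofPred_eq, AffineMap.coe_neg, Pi.neg_apply, Set.mem_univ,
    iff_true]
  rcases le_total 0 (h x) with h | h
  · exact Or.inl h
  · exact Or.inr (by linarith)

/-- The hyperplane `h = 0` as an affine subspace. -/
def hyp (h : E →ᵃ[ℝ] ℝ) : AffineSubspace ℝ E := (affineSpan ℝ {(0:ℝ)}).comap h

lemma mem_hyp (h : E →ᵃ[ℝ] ℝ) (x : E) : x ∈ hyp h ↔ h x = 0 := by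
  simp [hyp]

lemma hs_inter (h : E →ᵃ[ℝ] ℝ) : hs h ∩ hs (-h) = (hyp h : Set E) := by
  ext x
  simp only [hs, Set.mem_inter_iff, Set.mem_ofPred_eq, AffineMap.coe_neg, Pi.neg_apply,
    SetLike.mem_coe, mem_hyp]
  constructor
  · rintro ⟨a, b⟩
    linarith
  · intro a
    simp [a]

lemma hyp_ne_top (h : E →ᵃ[ℝ] ℝ) (hh : ∃ x, h x ≠ 0) : hyp h ≠ ⊤ := by
  obtain ⟨x, hx⟩ := hh
  intro H
  exact hx ((mem_hyp h x).1 (H ▸ AffineSubspace.mem_top ℝ E x))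

lemma interior_hyp [FiniteDimensional ℝ E] (h : E →ᵃ[ℝ] ℝ) (hh : ∃ x, h x ≠ 0) :
    interior (hyp h : Set E) = ∅ := by
  by_contra H
  have := (hyp h).convex.interior_nonempty_iff_affineSpan_eq_top.1
    (Set.nonempty_iff_ne_empty.2 H)
  rw [AffineSubspace.affineSpan_coe] at this
  exact hyp_ne_top h hh this

/-! ### Affine maps -/

lemma exists_affine_inv [FiniteDimensional ℝ E] (A : E →ᵃ[ℝ] E)
    (hA : LinearMap.det A.linear ≠ 0) :
    ∃ B : E →ᵃ[ℝ] E, (∀ x, B (A x) = x) ∧ (∀ x, A (B x) = x) := by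
  let e : E ≃ₗ[ℝ] E := LinearEquiv.ofIsUnitDet (f := A.linear)
    (v := Module.finBasis ℝ E) (v' := Module.finBasis ℝ E)
    (by rw [LinearMap.det_toMatrix]; exact isUnit_iff_ne_zero.2 hA)
  have he : ∀ x, e x = A.linear x := fun x => rfl
  have hAx : ∀ x, A x = A.linear x + A 0 := fun x => by
    have := A.map_vadd 0 x
    simpa using this
  refine ⟨e.symm.toLinearMap.toAffineMap.comp (AffineMap.id ℝ E - AffineMap.const ℝ E (A 0)),
    fun x => ?_, fun x => ?_⟩
  · simp only [AffineMap.comp_apply, AffineMap.coe_sub, Pi.sub_apply, AffineMap.id_apply,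
      AffineMap.const_apply, LinearMap.coe_toAffineMap, LinearEquiv.coe_coe]
    rw [hAx, add_sub_cancel_right, ← he, e.symm_apply_apply]
  · simp only [AffineMap.comp_apply, AffineMap.coe_sub, Pi.sub_apply, AffineMap.id_apply,
      AffineMap.const_apply, LinearMap.coe_toAffineMap, LinearEquiv.coe_coe]
    rw [hAx, ← he, e.apply_symm_apply, sub_add_cancel]

/-- The affine map `x ↦ x + c(x) v`. -/
def trv (c : E →ᵃ[ℝ] ℝ) (v : E) : E →ᵃ[ℝ] E :=
  AffineMap.id ℝ E + (LinearMap.toSpanSingleton ℝ E v).toAffineMap.comp c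

lemma trv_apply (c : E →ᵃ[ℝ] ℝ) (v x : E) : trv c v x = x + c x • v := by
  simp [trv]

lemma trv_det [FiniteDimensional ℝ E] (c : E →ᵃ[ℝ] ℝ) (v : E) :
    LinearMap.det (trv c v).linear = 1 + c.linear v := by
  rw [← LinearMap.transvection.det]
  congr 1

variable {ι : Type*} [Fintype ι] [DecidableEq ι]

/-- The base simplex. -/
def sx (b : AffineBasis ι ℝ E) : Set E := convexHull ℝ (Set.range b)

lemma mem_sx (b : AffineBasis ι ℝ E) (x : E) : x ∈ sx b ↔ ∀ k, 0 ≤ b.coord k x := by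
  rw [sx, b.convexHull_eq_nonneg_coord]
  rfl

lemma sx_compact (b : AffineBasis ι ℝ E) : IsCompact (sx b) :=
  (Set.finite_range b).isCompact_convexHull ℝ

lemma sx_convex (b : AffineBasis ι ℝ E) : Convex ℝ (sx b) := convex_convexHull _ _

lemma coord_add (b : AffineBasis ι ℝ E) (k i j : ι) (x : E) (s : ℝ) :
    b.coord k (x + s • (b j - b i)) =
      b.coord k x + s * ((if k = j then 1 else 0) - (if k = i then 1 else 0)) := by
  have h1 : b.coord k (x + s • (b j - b i)) =
      (b.coord k).linear (s • (b j - b i)) + b.coord k x := by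
    have := (b.coord k).map_vadd x (s • (b j - b i))
    rw [← vadd_eq_add, ← vadd_eq_add, ← this, vadd_eq_add, vadd_eq_add, add_comm]
  have h2 : (b.coord k).linear (b j - b i) = b.coord k (b j) - b.coord k (b i) := by
    have := (b.coord k).linearMap_vsub (b j) (b i)
    simpa using this
  rw [h1, map_smul, h2, b.coord_apply, b.coord_apply, smul_eq_mul, add_comm]

lemma coord_linear (b : AffineBasis ι ℝ E) (k i j : ι) :
    (b.coord k).linear (b j - b i) = (if k = j then 1 else 0) - (if k = i then 1 else 0) := by
  have := (b.coord k).linearMap_vsub (b j) (b i)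
  rw [← b.coord_apply, ← b.coord_apply]
  simpa using this

/-- shear moving vertex `i` towards vertex `j` by the fraction `t`. -/
def shr (b : AffineBasis ι ℝ E) (i j : ι) (t : ℝ) : E →ᵃ[ℝ] E :=
  trv (b.coord i) (t • (b j - b i))

lemma shr_det [FiniteDimensional ℝ E] (b : AffineBasis ι ℝ E) {i j : ι} (hij : i ≠ j) (t : ℝ) :
    LinearMap.det (shr b i j t).linear = 1 - t := by
  rw [shr, trv_det, map_smul, coord_linear]
  simp [hij]
  ring

lemma shr_coord (b : AffineBasis ι ℝ E) (k i j : ι) (t : ℝ) (x : E) :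
    b.coord k (shr b i j t x) = b.coord k x +
      (b.coord i x * t) * ((if k = j then 1 else 0) - (if k = i then 1 else 0)) := by
  rw [shr, trv_apply, smul_smul, coord_add]

lemma shr_vertex (b : AffineBasis ι ℝ E) (i j : ι) (t : ℝ) :
    shr b i j t (b i) = b i + t • (b j - b i) := by
  rw [shr, trv_apply, b.coord_apply_eq, one_smul]

lemma shr_vertex_ne (b : AffineBasis ι ℝ E) (i j k : ι) (hk : k ≠ i) (t : ℝ) :
    shr b i j t (b k) = b k := by
  rw [shr, trv_apply, b.coord_apply_ne hk.symm, zero_smul, add_zero]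

/-- the cutting functional. -/
def cf (b : AffineBasis ι ℝ E) (i j : ι) (t : ℝ) : E →ᵃ[ℝ] ℝ :=
  (1 - t) • b.coord j - t • b.coord i

lemma cf_apply (b : AffineBasis ι ℝ E) (i j : ι) (t : ℝ) (x : E) :
    cf b i j t x = (1 - t) * b.coord j x - t * b.coord i x := by
  simp [cf]

lemma cf_neg (b : AffineBasis ι ℝ E) (i j : ι) (t : ℝ) :
    - cf b i j t = cf b j i (1 - t) := by
  ext x
  rw [AffineMap.coe_neg, Pi.neg_apply, cf_apply, cf_apply]
  ring

lemma sx_cut [FiniteDimensional ℝ E] (b : AffineBasis ι ℝ E) {i j : ι} (hij : i ≠ j) {t : ℝ}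
    (h0 : 0 < t) (h1 : t < 1) :
    sx b ∩ hs (cf b i j t) = shr b i j t '' sx b := by
  obtain ⟨B, hB1, hB2⟩ := exists_affine_inv (shr b i j t)
    (by rw [shr_det b hij]; linarith)
  have key : ∀ y, (shr b i j t y ∈ sx b ∩ hs (cf b i j t)) ↔ y ∈ sx b := by
    intro y
    rw [Set.mem_inter_iff, mem_sx, mem_sx]
    have e1 : b.coord i (shr b i j t y) = (1 - t) * b.coord i y := by
      rw [shr_coord]; simp [hij]; ring
    have e2 : b.coord j (shr b i j t y) = b.coord j y + t * b.coord i y := by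
      rw [shr_coord]; simp [hij.symm]; ring
    have e3 : ∀ k, k ≠ i → k ≠ j → b.coord k (shr b i j t y) = b.coord k y := by
      intro k hk hk'
      rw [shr_coord]; simp [hk, hk']
    have e4 : cf b i j t (shr b i j t y) = (1 - t) * b.coord j y := by
      rw [cf_apply, e1, e2]; ring
    have h1' : 0 < 1 - t := by linarith
    constructor
    · rintro ⟨ha, hb⟩ k
      have hb : 0 ≤ cf b i j t (shr b i j t y) := hb
      rw [e4] at hb
      by_cases hk : k = i
      · have := ha i
        rw [e1] at this
        rw [hk]
        exact nonneg_of_mul_nonneg_right this h1'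
      · by_cases hk' : k = j
        · rw [hk']
          exact nonneg_of_mul_nonneg_right hb h1'
        · rw [← e3 k hk hk']
          exact ha k
    · intro ha
      refine ⟨fun k => ?_, ?_⟩
      · by_cases hk : k = i
        · rw [hk, e1]
          exact mul_nonneg h1'.le (ha i)
        · by_cases hk' : k = j
          · rw [hk', e2]
            exact add_nonneg (ha j) (mul_nonneg h0.le (ha i))
          · rw [e3 k hk hk']
            exact ha k
      · change 0 ≤ cf b i j t (shr b i j t y)
        rw [e4]
        exact mul_nonneg h1'.le (ha j)
  ext x
  constructor
  · intro hx
    refine ⟨B x, ?_, hB2 x⟩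
    rw [← key, hB2]
    exact hx
  · rintro ⟨y, hy, rfl⟩
    exact (key y).2 hy

/-- The orientation reversing symmetry of the simplex. -/
def swp (b : AffineBasis ι ℝ E) (i j : ι) : E →ᵃ[ℝ] E :=
  trv (b.coord i - b.coord j) (b j - b i)

lemma swp_det [FiniteDimensional ℝ E] (b : AffineBasis ι ℝ E) {i j : ι} (hij : i ≠ j) :
    LinearMap.det (swp b i j).linear = -1 := by
  rw [swp, trv_det, AffineMap.sub_linear, LinearMap.sub_apply, coord_linear, coord_linear]
  norm_num [hij, hij.symm]

lemma swp_swp (b : AffineBasis ι ℝ E) {i j : ι} (hij : i ≠ j) (x : E) :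
    swp b i j (swp b i j x) = x := by
  have : ∀ y, swp b i j y = y + (b.coord i y - b.coord j y) • (b j - b i) := by
    intro y
    rw [swp, trv_apply]
    simp
  rw [this (swp b i j x), this x, coord_add, coord_add]
  simp only [hij, hij.symm, if_true, if_false]
  module

lemma swp_image (b : AffineBasis ι ℝ E) {i j : ι} (hij : i ≠ j) :
    swp b i j '' sx b = sx b := by
  have h1 : ∀ y, y ∈ sx b → swp b i j y ∈ sx b := by
    intro y hy
    rw [mem_sx] at hy ⊢
    intro k
    have : swp b i j y = y + (b.coord i y - b.coord j y) • (b j - b i) := by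
      rw [swp, trv_apply]
      simp
    rw [this, coord_add]
    by_cases hk : k = i
    · subst hk
      simp only [hij, if_true, if_false]
      have := hy j
      linarith
    · by_cases hk' : k = j
      · subst hk'
        simp only [hij.symm, if_true, if_false]
        have := hy i
        linarith
      · simp only [hk, hk', if_false]
        have := hy k
        linarith
  ext x
  constructor
  · rintro ⟨y, hy, rfl⟩
    exact h1 y hy
  · intro hx
    exact ⟨_, h1 x hx, swp_swp b hij x⟩

lemma exists_affine_map [FiniteDimensional ℝ E] (b b' : AffineBasis ι ℝ E) :
    ∃ A : E →ᵃ[ℝ] E, LinearMap.det A.linear ≠ 0 ∧ A '' sx b = sx b' := by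
  obtain ⟨i⟩ := b.nonempty
  let L : E ≃ₗ[ℝ] E := (b.basisOf i).equiv (b'.basisOf i) (Equiv.refl _)
  let A : E →ᵃ[ℝ] E := L.toLinearMap.toAffineMap + AffineMap.const ℝ E (b' i - L (b i))
  have hA : ∀ x, A x = L x + (b' i - L (b i)) := fun x => by simp [A]
  have hlin : A.linear = L.toLinearMap := by simp [A]
  have hv : ∀ k, A (b k) = b' k := by
    intro k
    rw [hA]
    by_cases hk : k = i
    · subst hk; abel
    · have h1 : L (b k - b i) = b' k - b' i := by
        have := (b.basisOf i).equiv_apply ⟨k, hk⟩ (b'.basisOf i) (Equiv.refl _)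
        simpa [L] using this
      rw [map_sub] at h1
      have : L (b k) = b' k - b' i + L (b i) := by rw [← h1]; abel
      rw [this]; abel
  refine ⟨A, ?_, ?_⟩
  · rw [hlin]
    exact L.isUnit_det'.ne_zero
  · rw [sx, sx, AffineMap.image_convexHull, ← Set.range_comp]
    congr 2
    funext k
    exact hv k

/-! ### Dissections -/

/-- Sets that are dissected into simplices by successive hyperplane cuts. -/
inductive Diss (b : AffineBasis ι ℝ E) : Set E → Prop
  | null (K : Set E) : IsCompact K → Convex ℝ K → interior K = ∅ → Diss b K
  | simplex (A : E →ᵃ[ℝ] E) : LinearMap.det A.linear ≠ 0 → Diss b (A '' sx b)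
  | cut (K : Set E) (h : E →ᵃ[ℝ] ℝ) : IsCompact K → Convex ℝ K → (∃ x, h x ≠ 0) →
      Diss b (K ∩ hs h) → Diss b (K ∩ hs (-h)) → Diss b K

lemma image_cut (A B : E →ᵃ[ℝ] E) (h1 : ∀ x, B (A x) = x) (K : Set E)
    (c : E →ᵃ[ℝ] ℝ) : (A '' K) ∩ hs (c.comp B) = A '' (K ∩ hs c) := by
  ext x
  constructor
  · rintro ⟨⟨y, hy, rfl⟩, hx⟩
    refine ⟨y, ⟨hy, ?_⟩, rfl⟩
    have hx : 0 ≤ c (B (A y)) := hx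
    rw [h1] at hx
    exact hx
  · rintro ⟨y, ⟨hy, hc⟩, rfl⟩
    refine ⟨⟨y, hy, rfl⟩, ?_⟩
    change 0 ≤ c (B (A y))
    rw [h1]
    exact hc

lemma image_sx_compact [FiniteDimensional ℝ E] (b : AffineBasis ι ℝ E) (A : E →ᵃ[ℝ] E) :
    IsCompact (A '' sx b) := (sx_compact b).image A.continuous_of_finiteDimensional

lemma image_sx_convex (b : AffineBasis ι ℝ E) (A : E →ᵃ[ℝ] E) :
    Convex ℝ (A '' sx b) := (sx_convex b).affine_image A

lemma image_sx_subset (b : AffineBasis ι ℝ E) (A : E →ᵃ[ℝ] E) {S : Set E} (hS : Convex ℝ S)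
    (h : ∀ k, A (b k) ∈ S) : A '' sx b ⊆ S := by
  rw [sx, AffineMap.image_convexHull]
  refine convexHull_min ?_ hS
  rintro _ ⟨_, ⟨k, rfl⟩, rfl⟩
  exact h k

lemma cf_ne [FiniteDimensional ℝ E] (b : AffineBasis ι ℝ E) {i j : ι} (hij : i ≠ j) {t : ℝ}
    (h0 : 0 < t) : cf b i j t (b i) ≠ 0 := by
  rw [cf_apply, b.coord_apply_eq, b.coord_apply_ne hij.symm]
  simp
  exact h0.ne'

lemma diss_simplex_inter [FiniteDimensional ℝ E] (b : AffineBasis ι ℝ E) (g : E →ᵃ[ℝ] ℝ) (N : ℕ) :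
    ∀ A : E →ᵃ[ℝ] E, LinearMap.det A.linear ≠ 0 →
      (Finset.univ.filter fun k => g (A (b k)) ≠ 0).card ≤ N → Diss b (A '' sx b ∩ hs g) := by
  induction N with
  | zero =>
    intro A hA hN
    have hall : ∀ k, g (A (b k)) = 0 := by
      intro k
      by_contra hk
      have : k ∈ (Finset.univ.filter fun k => g (A (b k)) ≠ 0) := by simp [hk]
      rw [Finset.card_eq_zero.1 (Nat.le_zero.1 hN)] at this
      simp at this
    rw [Set.inter_eq_left.2 (image_sx_subset b A (hs_convex g) fun k => (hall k).ge)]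
    exact Diss.simplex A hA
  | succ N ih =>
    intro A hA hN
    by_cases hneg : ∃ j, g (A (b j)) < 0
    · obtain ⟨j, hj⟩ := hneg
      by_cases hpos : ∃ i, 0 < g (A (b i))
      · obtain ⟨i, hi⟩ := hpos
        have hij : i ≠ j := by
          rintro rfl
          linarith
        obtain ⟨B, hB1, hB2⟩ := exists_affine_inv A hA
        set p := g (A (b i)) with hp
        set q := g (A (b j)) with hq
        set t := p / (p - q) with ht
        have hpq : 0 < p - q := by linarith
        have h0 : 0 < t := div_pos hi hpq
        have h1 : t < 1 := by rw [ht, div_lt_one hpq]; linarith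
        have hw : (1 - t) * p + t * q = 0 := by
          rw [ht]; field_simp; ring
        have main : ∀ (i j : ι) (t : ℝ), i ≠ j → 0 < t → t < 1 → g (A (b i)) ≠ 0 →
            (1 - t) * g (A (b i)) + t * g (A (b j)) = 0 →
            Diss b ((A.comp (shr b i j t)) '' sx b ∩ hs g) := by
          intro i j t hij h0 h1 hi0 hw
          refine ih _ ?_ ?_
          · rw [AffineMap.comp_linear, LinearMap.det_comp, shr_det b hij]
            exact mul_ne_zero hA (by linarith)
          · refine Nat.lt_succ_iff.1 (lt_of_lt_of_le (Finset.card_lt_card ?_) hN)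
            have hzero : g ((A.comp (shr b i j t)) (b i)) = 0 := by
              have e : b i + t • (b j - b i) = AffineMap.lineMap (b i) (b j) t := by
                rw [AffineMap.lineMap_apply_module]; module
              rw [AffineMap.comp_apply, shr_vertex, e, AffineMap.apply_lineMap,
                AffineMap.apply_lineMap, AffineMap.lineMap_apply_module]
              simpa using hw
            rw [Finset.ssubset_iff_of_subset]
            · refine ⟨i, by simp [hi0], ?_⟩
              simp only [Finset.mem_filter, hzero]
              simp
            · intro k hk
              simp only [Finset.mem_filter, Finset.mem_univ, true_and] at hk ⊢
              by_cases hki : k = i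
              · rw [hki]; exact hi0
              · rwa [AffineMap.comp_apply, shr_vertex_ne b i j k hki] at hk
        have e1 : ∀ (i j : ι) (t : ℝ), i ≠ j → 0 < t → t < 1 →
            (A '' sx b ∩ hs g) ∩ hs ((cf b i j t).comp B) =
              (A.comp (shr b i j t)) '' sx b ∩ hs g := by
          intro i j t hij h0 h1
          rw [Set.inter_right_comm, image_cut A B hB1, sx_cut b hij h0 h1, AffineMap.coe_comp,
            Set.image_comp]
        refine Diss.cut _ ((cf b i j t).comp B)
          ((image_sx_compact b A).inter_right (hs_closed g))
          ((image_sx_convex b A).inter (hs_convex g)) ⟨A (b i), ?_⟩ ?_ ?_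
        · rw [AffineMap.comp_apply, hB1]
          exact cf_ne b hij h0
        · rw [e1 i j t hij h0 h1]
          exact main i j t hij h0 h1 hi.ne' hw
        · have : -((cf b i j t).comp B) = (cf b j i (1 - t)).comp B := by
            rw [← cf_neg]
            ext x
            simp
          rw [this, e1 j i (1 - t) hij.symm (by linarith) (by linarith)]
          exact main j i (1 - t) hij.symm (by linarith) (by linarith) hj.ne (by linarith)
      · push Not at hpos
        refine Diss.null _ ((image_sx_compact b A).inter_right (hs_closed g))
          ((image_sx_convex b A).inter (hs_convex g)) ?_
        have hsub : A '' sx b ⊆ hs (-g) := by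
          refine image_sx_subset b A (hs_convex _) fun k => ?_
          have := hpos k
          simp only [hs, Set.mem_ofPred_eq, AffineMap.coe_neg, Pi.neg_apply]
          linarith
        have : A '' sx b ∩ hs g ⊆ hyp g := by
          rw [← hs_inter, Set.inter_comm]
          exact Set.inter_subset_inter_right _ hsub
        have h2 := interior_mono this
        rw [interior_hyp g ⟨_, hj.ne⟩] at h2
        exact Set.subset_empty_iff.1 h2
    · push Not at hneg
      rw [Set.inter_eq_left.2 (image_sx_subset b A (hs_convex g) hneg)]
      exact Diss.simplex A hA

lemma Diss.inter [FiniteDimensional ℝ E] {b : AffineBasis ι ℝ E} {K : Set E} (hK : Diss b K)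
    (g : E →ᵃ[ℝ] ℝ) : Diss b (K ∩ hs g) := by
  induction hK with
  | null K h1 h2 h3 =>
    refine Diss.null _ (h1.inter_right (hs_closed g)) (h2.inter (hs_convex g)) ?_
    have := interior_mono (Set.inter_subset_left : K ∩ hs g ⊆ K)
    rw [h3] at this
    exact Set.subset_empty_iff.1 this
  | simplex A hA => exact diss_simplex_inter b g _ A hA le_rfl
  | cut K h h1 h2 h3 _ _ ih1 ih2 =>
    refine Diss.cut _ h (h1.inter_right (hs_closed g)) (h2.inter (hs_convex g)) h3 ?_ ?_
    · rw [Set.inter_right_comm]; exact ih1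
    · rw [Set.inter_right_comm]; exact ih2

/-- Abstract functional vanishing on simplices. -/
structure NullFun (b : AffineBasis ι ℝ E) (D : Set E → ℝ) : Prop where
  cut : ∀ (K : Set E) (h : E →ᵃ[ℝ] ℝ), IsCompact K → Convex ℝ K → (∃ x, h x ≠ 0) →
    D K = D (K ∩ hs h) + D (K ∩ hs (-h))
  null : ∀ K : Set E, IsCompact K → Convex ℝ K → interior K = ∅ → D K = 0
  simplex : ∀ A : E →ᵃ[ℝ] E, LinearMap.det A.linear ≠ 0 → D (A '' sx b) = 0

lemma NullFun.diss {b : AffineBasis ι ℝ E} {D : Set E → ℝ} (hD : NullFun b D) {K : Set E}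
    (hK : Diss b K) : D K = 0 := by
  induction hK with
  | null K h1 h2 h3 => exact hD.null K h1 h2 h3
  | simplex A hA => exact hD.simplex A hA
  | cut K h h1 h2 h3 _ _ ih1 ih2 => rw [hD.cut K h h1 h2 h3, ih1, ih2, add_zero]

/-- Cells of `P`. -/
def Cell (b : AffineBasis ι ℝ E) (P K : Set E) : Prop :=
  IsCompact K ∧ Convex ℝ K ∧ ∀ T, T ⊆ P → Diss b T → Diss b (T ∩ K)

lemma Cell.inter [FiniteDimensional ℝ E] {b : AffineBasis ι ℝ E} {P K : Set E} (hK : Cell b P K)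
    (g : E →ᵃ[ℝ] ℝ) : Cell b P (K ∩ hs g) := by
  refine ⟨hK.1.inter_right (hs_closed g), hK.2.1.inter (hs_convex g), fun T hT hd => ?_⟩
  rw [← Set.inter_assoc]
  exact (hK.2.2 T hT hd).inter g

lemma subset_of_null {K N F S : Set E} (hc : Convex ℝ K) (hcl : IsClosed K)
    (hint : (interior K).Nonempty) (hF : IsClosed F) (hsub : K ⊆ N ∪ F) (hS : interior S = ∅)
    (hNS : K ∩ N ⊆ S) : K ⊆ F := by
  have h1 : interior K \ F ⊆ interior S := by
    refine interior_maximal ?_ (isOpen_interior.sdiff hF)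
    rintro x ⟨hx, hxF⟩
    have hxK := interior_subset hx
    exact hNS ⟨hxK, (hsub hxK).resolve_right hxF⟩
  rw [hS] at h1
  have h2 : interior K ⊆ F := Set.sdiff_eq_empty.1 (Set.subset_empty_iff.1 h1)
  have h3 := hc.closure_interior_eq_closure_of_nonempty_interior hint
  rw [hcl.closure_eq] at h3
  rw [← h3]
  exact closure_minimal h2 hF

lemma sx_image_inter (b : AffineBasis ι ℝ E) (A B : E →ᵃ[ℝ] E)
    (hB2 : ∀ x, A (B x) = x) (x : E) (h : ∀ k, x ∈ hs ((b.coord k).comp B)) : x ∈ A '' sx b :=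
  ⟨B x, (mem_sx b _).2 h, hB2 x⟩

lemma NullFun.cover [FiniteDimensional ℝ E] [Nontrivial ι] {b : AffineBasis ι ℝ E} {D : Set E → ℝ}
    (hD : NullFun b D) (P : Set E) (l : List (Set E)) :
    (∀ T ∈ l, T ⊆ P ∧ IsClosed T ∧
      (interior T = ∅ ∨ ∃ A : E →ᵃ[ℝ] E, LinearMap.det A.linear ≠ 0 ∧ T = A '' sx b)) →
    ∀ K, Cell b P K → K ⊆ {x | ∃ T ∈ l, x ∈ T} → D K = 0 := by
  induction l with
  | nil =>
    intro _ K hK hsub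
    have : K = ∅ := by
      refine Set.subset_empty_iff.1 fun x hx => ?_
      obtain ⟨T, hT, -⟩ := hsub hx
      simp at hT
    subst this
    exact hD.null _ hK.1 hK.2.1 interior_empty
  | cons T l ih =>
    intro hl
    have ih := ih fun T' hT' => hl T' (List.mem_cons_of_mem _ hT')
    obtain ⟨hTP, hTc, hT⟩ := hl T List.mem_cons_self
    set F : Set E := {x | ∃ T ∈ l, x ∈ T} with hFdef
    have hF : IsClosed F := by
      have : F = ⋃ T ∈ {T | T ∈ l}, T := by
        ext x; simp [hFdef]
      rw [this]
      exact (List.finite_toSet l).isClosed_biUnion fun T' hT' =>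
        (hl T' (List.mem_cons_of_mem _ hT')).2.1
    have hcons : {x | ∃ T' ∈ T :: l, x ∈ T'} = T ∪ F := by
      ext x; simp [hFdef]
    rw [hcons]
    rcases hT with hT | ⟨A, hA, rfl⟩
    · intro K hK hsub
      by_cases hint : interior K = ∅
      · exact hD.null K hK.1 hK.2.1 hint
      · exact ih K hK (subset_of_null hK.2.1 hK.1.isClosed (Set.nonempty_iff_ne_empty.2 hint) hF
          hsub hT Set.inter_subset_right)
    · obtain ⟨B, hB1, hB2⟩ := exists_affine_inv A hA
      have inner : ∀ s : Finset ι, ∀ K, Cell b P K → K ⊆ A '' sx b ∪ F →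
          (∀ k, k ∉ s → K ⊆ hs ((b.coord k).comp B)) → D K = 0 := by
        intro s
        induction s using Finset.induction_on with
        | empty =>
          intro K hK hsub hall
          have hKT : K ⊆ A '' sx b := fun x hx =>
            sx_image_inter b A B hB2 x fun k => hall k (by simp) hx
          have := hK.2.2 _ hTP (Diss.simplex A hA)
          rw [Set.inter_eq_right.2 hKT] at this
          exact hD.diss this
        | insert k s hks ihs =>
          intro K hK hsub hall
          have hne : ∃ x, (b.coord k).comp B x ≠ 0 := by
            refine ⟨A (b k), ?_⟩
            rw [AffineMap.comp_apply, hB1, b.coord_apply_eq]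
            exact one_ne_zero
          rw [hD.cut K ((b.coord k).comp B) hK.1 hK.2.1 hne]
          have c1 := hK.inter ((b.coord k).comp B)
          have c2 := hK.inter (-((b.coord k).comp B))
          rw [ihs _ c1 (Set.inter_subset_left.trans hsub), zero_add]
          · by_cases hint : interior (K ∩ hs (-((b.coord k).comp B))) = ∅
            · exact hD.null _ c2.1 c2.2.1 hint
            · refine ih _ c2 (subset_of_null c2.2.1 c2.1.isClosed
                (Set.nonempty_iff_ne_empty.2 hint) hF (Set.inter_subset_left.trans hsub)
                (interior_hyp _ hne) ?_)
              rw [← hs_inter]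
              rintro x ⟨⟨-, hx⟩, ⟨y, hy, rfl⟩⟩
              refine ⟨?_, hx⟩
              change 0 ≤ b.coord k (B (A y))
              rw [hB1]
              exact (mem_sx b y).1 hy k
          · intro k' hk'
            by_cases hkk : k' = k
            · subst hkk
              exact Set.inter_subset_right
            · exact Set.inter_subset_left.trans (hall k' (by simp [hkk, hk']))
      intro K hK hsub
      exact inner Finset.univ K hK hsub fun k hk => absurd (Finset.mem_univ k) hk

lemma NullFun.polytope [FiniteDimensional ℝ E] [Nontrivial ι] {b : AffineBasis ι ℝ E}
    {D : Set E → ℝ} (hD : NullFun b D) (P : Set E) (hP : IsPolytope P) : D P = 0 := by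
  classical
  obtain ⟨s, hs, rfl⟩ := hP
  set P : Set E := convexHull ℝ (s : Set E) with hPdef
  let l : List (Set E) :=
    List.map (fun t : Finset E => convexHull ℝ (t : Set E))
      (s.powerset.filter fun t : Finset E => AffineIndependent ℝ ((↑) : t → E)).toList
  refine hD.cover P l ?_ P ?_ ?_
  · intro T hT
    simp only [l, List.mem_map, Finset.mem_toList, Finset.mem_filter, Finset.mem_powerset] at hT
    obtain ⟨t, ⟨hts, hind⟩, rfl⟩ := hT
    refine ⟨convexHull_mono (by exact_mod_cast hts), (t.finite_toSet.isClosed_convexHull ℝ), ?_⟩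
    by_cases hint : interior (convexHull ℝ (t : Set E)) = ∅
    · exact Or.inl hint
    · right
      have htop := interior_convexHull_nonempty_iff_affineSpan_eq_top.1
        (Set.nonempty_iff_ne_empty.2 hint)
      let b0 : AffineBasis t ℝ E := ⟨((↑) : t → E), hind, by simpa using htop⟩
      have hcard : Fintype.card t = Fintype.card ι := by
        rw [b0.card_eq_finrank_add_one, b.card_eq_finrank_add_one]
      let b' : AffineBasis ι ℝ E := b0.reindex (Fintype.equivOfCardEq hcard)
      obtain ⟨A, hA, hAb⟩ := exists_affine_map b b'
      refine ⟨A, hA, ?_⟩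
      rw [hAb, sx]
      congr 1
      rw [AffineBasis.coe_reindex, EquivLike.range_comp]
      change (t : Set E) = Set.range ((↑) : t → E)
      simp
  · refine ⟨s.finite_toSet.isCompact_convexHull ℝ, convex_convexHull _ _, fun T hT hd => ?_⟩
    rwa [Set.inter_eq_left.2 hT]
  · intro x hx
    rw [hPdef, convexHull_eq_union] at hx
    simp only [Set.mem_iUnion] at hx
    obtain ⟨t, hts, hind, hx⟩ := hx
    refine ⟨convexHull ℝ (t : Set E), ?_, hx⟩
    simp only [l, List.mem_map, Finset.mem_toList, Finset.mem_filter, Finset.mem_powerset]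
    exact ⟨t, ⟨by exact_mod_cast hts, hind⟩, rfl⟩

/-! ### The valuation on indicators -/

section valuation

variable {Z : (E → EReal) → ℝ}

lemma Z_affine_s8 [FiniteDimensional ℝ E] (hsl : SLInv Z) (htrans : TransInv Z) {K : Set E}
    (hK : IsCompact K) (hc : Convex ℝ K) (hne : K.Nonempty) (A : E →ᵃ[ℝ] E)
    (hA : LinearMap.det A.linear = 1) :
    Z (eIndicator (A '' K)) = Z (eIndicator K) := by
  let e : E ≃ₗ[ℝ] E := LinearEquiv.ofIsUnitDet (f := A.linear)
    (v := Module.finBasis ℝ E) (v' := Module.finBasis ℝ E)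
    (by rw [LinearMap.det_toMatrix, hA]; exact isUnit_one)
  have he : ∀ x, e x = A.linear x := fun x => rfl
  have hAx : ∀ x, A x = e x + A 0 := fun x => by
    have := A.map_vadd 0 x
    rw [he]
    simpa using this
  have hedet : LinearMap.det (e : E →ₗ[ℝ] E) = 1 := hA
  have hdet : LinearMap.det (e.symm : E →ₗ[ℝ] E) = 1 := by
    have := e.det_mul_det_symm
    rwa [hedet, one_mul] at this
  have h1 := hsl _ (isLC_ind hK hc hne) (e.symm : E →ₗ[ℝ] E) hdet
  have e1 : (fun x => eIndicator K ((e.symm : E →ₗ[ℝ] E) x)) = eIndicator (e '' K) := by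
    funext x
    have : x ∈ e '' K ↔ e.symm x ∈ K := by
      constructor
      · rintro ⟨y, hy, rfl⟩
        simpa using hy
      · intro h
        exact ⟨_, h, by simp⟩
    by_cases hx : e.symm x ∈ K
    · simp only [eIndicator, LinearEquiv.coe_coe, hx, this.2 hx, if_true]
    · simp only [eIndicator, LinearEquiv.coe_coe, hx, mt this.1 hx, if_false]
  rw [e1] at h1
  have hLC : IsLC (eIndicator (e '' K)) :=
    isLC_ind (hK.image (LinearMap.continuous_of_finiteDimensional (e : E →ₗ[ℝ] E)))
      (hc.linear_image (e : E →ₗ[ℝ] E)) (hne.image _)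
  have h2 := htrans _ hLC (A 0)
  have e2 : (fun x => eIndicator (e '' K) (x - A 0)) = eIndicator (A '' K) := by
    funext x
    have : x ∈ A '' K ↔ x - A 0 ∈ e '' K := by
      constructor
      · rintro ⟨y, hy, rfl⟩
        exact ⟨y, hy, by rw [hAx y]; abel⟩
      · rintro ⟨y, hy, hxy⟩
        exact ⟨y, hy, by rw [hAx y, hxy]; abel⟩
    by_cases hx : x - A 0 ∈ e '' K
    · simp only [eIndicator, hx, this.2 hx, if_true]
    · simp only [eIndicator, hx, mt this.1 hx, if_false]
  rw [e2] at h2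
  rw [h2, h1]

lemma Z_cut [FiniteDimensional ℝ E] (hval : IsVal Z)
    (hsimple : ∀ u : E → EReal, IsLC u → interior (edom u) = ∅ → Z u = 0) {K : Set E}
    (hK : IsCompact K) (hc : Convex ℝ K) (h : E →ᵃ[ℝ] ℝ) (hh : ∃ x, h x ≠ 0)
    (h1 : (K ∩ hs h).Nonempty) (h2 : (K ∩ hs (-h)).Nonempty) :
    Z (eIndicator K) = Z (eIndicator (K ∩ hs h)) + Z (eIndicator (K ∩ hs (-h))) := by
  have hU : (K ∩ hs h) ∪ (K ∩ hs (-h)) = K := by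
    rw [← Set.inter_union_distrib_left, hs_univ, Set.inter_univ]
  have hI : (K ∩ hs h) ∩ (K ∩ hs (-h)) = K ∩ hyp h := by
    rw [← Set.inter_inter_distrib_left, hs_inter]
  have hne : K.Nonempty := h1.mono Set.inter_subset_left
  have hIne : (K ∩ (hyp h : Set E)).Nonempty := by
    obtain ⟨x, hxK, hx⟩ := h1
    obtain ⟨y, hyK, hy⟩ := h2
    have hx : 0 ≤ h x := hx
    have hy : h y ≤ 0 := by
      have : 0 ≤ (-h) y := hy
      simpa using this
    have := hc.isPreconnected.intermediate_value hyK hxK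
      (h.continuous_of_finiteDimensional.continuousOn)
    obtain ⟨z, hz, hz0⟩ := this ⟨hy, hx⟩
    exact ⟨z, hz, (mem_hyp h z).2 hz0⟩
  have hIc : IsCompact (K ∩ (hyp h : Set E)) := by
    rw [← hs_inter]
    exact hK.inter_right ((hs_closed h).inter (hs_closed (-h)))
  have hIv : Convex ℝ (K ∩ (hyp h : Set E)) := hc.inter (hyp h).convex
  have hz : Z (eIndicator (K ∩ (hyp h : Set E))) = 0 := by
    refine hsimple _ (isLC_ind hIc hIv hIne) ?_
    rw [edom_ind]
    have := interior_mono (Set.inter_subset_right : K ∩ (hyp h : Set E) ⊆ hyp h)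
    rw [interior_hyp h hh] at this
    exact Set.subset_empty_iff.1 this
  have := hval (eIndicator (K ∩ hs h)) (eIndicator (K ∩ hs (-h)))
    (isLC_ind (hK.inter_right (hs_closed h)) (hc.inter (hs_convex h)) h1)
    (isLC_ind (hK.inter_right (hs_closed (-h))) (hc.inter (hs_convex (-h))) h2)
  rw [ind_union, ind_inter, hU, hI, hz, add_zero] at this
  exact this (isLC_ind hK hc hne)

lemma vol_hyp [FiniteDimensional ℝ E] [MeasurableSpace E] [BorelSpace E] (μ : Measure E)
    [μ.IsAddHaarMeasure] {K : Set E} (hK : IsCompact K) (h : E →ᵃ[ℝ] ℝ)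
    (hh : ∃ x, h x ≠ 0) :
    (μ K).toReal = (μ (K ∩ hs h)).toReal + (μ (K ∩ hs (-h))).toReal := by
  have hU : (K ∩ hs h) ∪ (K ∩ hs (-h)) = K := by
    rw [← Set.inter_union_distrib_left, hs_univ, Set.inter_univ]
  have hI : μ ((K ∩ hs h) ∩ (K ∩ hs (-h))) = 0 := by
    rw [← Set.inter_inter_distrib_left, hs_inter]
    exact measure_mono_null Set.inter_subset_right
      (Measure.addHaar_affineSubspace μ _ (hyp_ne_top h hh))
  have hm : MeasurableSet (K ∩ hs (-h)) := (hK.inter_right (hs_closed (-h))).measurableSet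
  have h3 := measure_union_add_inter (μ := μ) (K ∩ hs h) hm
  rw [hU, hI, add_zero] at h3
  rw [h3, ENNReal.toReal_add]
  · exact (hK.inter_right (hs_closed h)).measure_lt_top.ne
  · exact (hK.inter_right (hs_closed (-h))).measure_lt_top.ne

/-- Cauchy's functional equation with weak upper semicontinuity at 1. -/
lemma cauchy_usc (f : ℝ → ℝ) (hadd : ∀ x y, 0 < x → 0 < y → f (x + y) = f x + f y)
    (husc : ∀ v : ℕ → ℝ, (∀ k, 0 < v k) → Tendsto v atTop (𝓝 1) →
      limsup (fun k => f (v k)) atTop ≤ f 1) :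
    ∀ x, 0 < x → f x = f 1 * x := by
  -- multiples
  have hmul : ∀ (m : ℕ) (x : ℝ), 0 < x → f ((m + 1 : ℕ) * x) = (m + 1 : ℕ) * f x := by
    intro m
    induction m with
    | zero => intro x _; simp
    | succ m ih =>
      intro x hx
      have : ((m + 1 + 1 : ℕ) : ℝ) * x = (m + 1 : ℕ) * x + x := by push_cast; ring
      rw [this, hadd _ _ (by positivity) hx, ih x hx]
      push_cast; ring
  have hrat : ∀ q : ℚ, 0 < q → f q = f 1 * q := by
    intro q hq
    obtain ⟨d, hd⟩ : ∃ d : ℕ, q.den = d + 1 := ⟨q.den - 1, by have := q.den_pos; omega⟩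
    obtain ⟨a, ha⟩ : ∃ a : ℕ, q.num = (a + 1 : ℕ) :=
      ⟨q.num.toNat - 1, by have := Rat.num_pos.2 hq; omega⟩
    have h1 := hmul d q (by exact_mod_cast hq)
    have h2 := hmul a 1 one_pos
    have h3 : ((d + 1 : ℕ) : ℝ) * q = (a + 1 : ℕ) * 1 := by
      rw [← hd, mul_one]
      have : (q.den : ℚ) * q = q.num := Rat.den_mul_eq_num q
      rw [ha] at this
      exact_mod_cast this
    rw [h3, h2] at h1
    have h4 : ((d + 1 : ℕ) : ℝ) ≠ 0 := by positivity
    rw [mul_one] at h3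
    rw [← h3] at h1
    have : ((d + 1 : ℕ) : ℝ) * (f q - f 1 * q) = 0 := by rw [mul_sub, ← h1]; ring
    have := (mul_eq_zero.1 this).resolve_left h4
    linarith
  -- key: a value of `f - f 1 * id` cannot be positive or negative
  have key : ∀ (g : ℝ) (v : ℕ → ℝ), (∀ k, 0 < v k) → Tendsto v atTop (𝓝 1) →
      (∀ k, f (v k) = f 1 * v k + g) → g ≤ 0 := by
    intro g v hv hlim hf
    have h1 := husc v hv hlim
    have h2 : Tendsto (fun k => f (v k)) atTop (𝓝 (f 1 * 1 + g)) := by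
      simp only [hf]
      exact (hlim.const_mul _).add_const _
    rw [h2.limsup_eq] at h1
    linarith
  have hseq : ∀ y : ℝ, ∃ q : ℕ → ℚ, (∀ k, y < q k) ∧
      Tendsto (fun k => (q k : ℝ)) atTop (𝓝 y) := by
    intro y
    have : ∀ k : ℕ, ∃ q : ℚ, y < q ∧ (q : ℝ) < y + 1 / ((k : ℝ) + 1) := fun k =>
      exists_rat_btwn (by have : (0:ℝ) < 1 / ((k : ℝ) + 1) := by positivity
                          linarith)
    choose q h1 h2 using this
    refine ⟨q, h1, ?_⟩
    refine tendsto_of_tendsto_of_tendsto_of_le_of_le tendsto_const_nhds ?_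
      (fun k => (h1 k).le) (fun k => (h2 k).le)
    have := (tendsto_one_div_add_atTop_nhds_zero_nat (𝕜 := ℝ)).const_add y
    simpa using this
  -- small elements
  have small : ∀ x, 0 < x → x < 1 → f x = f 1 * x := by
    intro x hx hx1
    refine le_antisymm ?_ ?_
    · obtain ⟨q, hq1, hq2⟩ := hseq (1 - x)
      have hq0 : ∀ k, (0:ℝ) < q k := fun k => by have := hq1 k; linarith
      have := key (f x - f 1 * x) (fun k => x + q k) (fun k => by have := hq0 k; linarith)
        (by simpa using hq2.const_add x) (fun k => by
          rw [hadd _ _ hx (hq0 k), hrat _ (by exact_mod_cast hq0 k)]; ring)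
      linarith
    · obtain ⟨q, hq1, hq2⟩ := hseq (1 + x)
      have hq0 : ∀ k, (0:ℝ) < q k - x := fun k => by have := hq1 k; linarith
      have hqp : ∀ k, (0:ℝ) < q k := fun k => by have := hq0 k; linarith
      have := key (f 1 * x - f x) (fun k => q k - x) hq0
        (by simpa using hq2.sub_const x) (fun k => by
          have h1 := hadd x (q k - x) hx (hq0 k)
          rw [add_sub_cancel, hrat _ (by exact_mod_cast hqp k)] at h1
          linarith)
      linarith
  intro x hx
  obtain ⟨m, hm⟩ := exists_nat_gt x
  have hm0 : (0:ℝ) < (m + 1 : ℕ) := by positivity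
  have h1 := hmul m (x / (m + 1 : ℕ)) (by positivity)
  have h2 := small (x / (m + 1 : ℕ)) (by positivity) (by
    rw [div_lt_one hm0]; push_cast; linarith)
  rw [mul_div_cancel₀ _ hm0.ne', h2] at h1
  rw [h1]
  field_simp

end valuation

/-! ### The main argument -/

/-- Dilation. -/
def dil (r : ℝ) : E →ᵃ[ℝ] E := (r • (LinearMap.id : E →ₗ[ℝ] E)).toAffineMap

lemma dil_image (r : ℝ) (K : Set E) : dil r '' K = r • K := by
  ext x
  simp [dil, Set.mem_smul_set]

lemma dil_det (r : ℝ) :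
    LinearMap.det (dil r : E →ᵃ[ℝ] E).linear = r ^ Module.finrank ℝ E := by
  simp [dil]

lemma vol_affine [FiniteDimensional ℝ E] [MeasurableSpace E] [BorelSpace E] (μ : Measure E)
    [μ.IsAddHaarMeasure] (A : E →ᵃ[ℝ] E) (K : Set E) :
    (μ (A '' K)).toReal = |LinearMap.det A.linear| * (μ K).toReal := by
  have hAx : ∀ x, A x = A.linear x + A 0 := fun x => by
    have := A.map_vadd 0 x
    simpa using this
  have : A '' K = (fun x => x + A 0) '' (A.linear '' K) := by
    rw [Set.image_image]
    exact Set.image_congr fun x _ => hAx x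
  rw [this, Set.image_add_right, measure_preimage_add_right, Measure.addHaar_image_linearMap,
    ENNReal.toReal_mul, ENNReal.toReal_ofReal (abs_nonneg _)]

theorem stmt8_pos [FiniteDimensional ℝ E] [MeasurableSpace E] [BorelSpace E] (μ : Measure E)
    [μ.IsAddHaarMeasure] (hfin : 0 < Module.finrank ℝ E) (Z : (E → EReal) → ℝ)
    (hval : IsVal Z)
    (hsimple : ∀ u : E → EReal, IsLC u → interior (edom u) = ∅ → Z u = 0)
    (husc : TauUSC Z) (hsl : SLInv Z) (htrans : TransInv Z) :
    ∃ c₁ : ℝ, ∀ P : Set E, IsPolytope P → Z (eIndicator P) = c₁ * (μ P).toReal := by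
  set n := Module.finrank ℝ E with hn
  obtain ⟨b⟩ : Nonempty (AffineBasis (Fin (n + 1)) ℝ E) :=
    AffineBasis.exists_affineBasis_of_finiteDimensional (by simp [hn])
  have : Nontrivial (Fin (n + 1)) := by
    rw [Fin.nontrivial_iff_two_le]; omega
  obtain ⟨i, j, hij⟩ := exists_pair_ne (Fin (n + 1))
  have hne : (sx b).Nonempty := ⟨b i, subset_convexHull ℝ _ ⟨i, rfl⟩⟩
  set rt : ℝ → ℝ := fun v => v ^ ((n : ℝ)⁻¹) with hrt
  have hrt_pos : ∀ v, 0 < v → 0 < rt v := fun v hv => Real.rpow_pos_of_pos hv _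
  have hrt_pow : ∀ v, 0 < v → rt v ^ n = v := fun v hv =>
    Real.rpow_inv_natCast_pow hv.le hfin.ne'
  set f : ℝ → ℝ := fun v => Z (eIndicator (rt v • sx b)) with hf
  have hpos : ∀ A : E →ᵃ[ℝ] E, 0 < LinearMap.det A.linear →
      Z (eIndicator (A '' sx b)) = f (LinearMap.det A.linear) := by
    intro A hA
    set d := LinearMap.det A.linear with hd
    have hr := hrt_pos d hA
    have h1 := Z_affine_s8 (Z := Z) hsl htrans ((sx_compact b).smul (rt d)) ((sx_convex b).smul (rt d))
      hne.smul_set (A.comp (dil (rt d)⁻¹)) (by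
        rw [AffineMap.comp_linear, LinearMap.det_comp, dil_det, ← hd, inv_pow, hrt_pow d hA]
        exact mul_inv_cancel₀ hA.ne')
    rw [AffineMap.coe_comp, Set.image_comp, dil_image, inv_smul_smul₀ hr.ne'] at h1
    exact h1
  have habs : ∀ A : E →ᵃ[ℝ] E, LinearMap.det A.linear ≠ 0 →
      Z (eIndicator (A '' sx b)) = f |LinearMap.det A.linear| := by
    intro A hA
    rcases lt_or_gt_of_ne hA with h | h
    · have hd : LinearMap.det (A.comp (swp b i j)).linear = - LinearMap.det A.linear := by
        rw [AffineMap.comp_linear, LinearMap.det_comp, swp_det b hij]; ring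
      have := hpos (A.comp (swp b i j)) (by rw [hd]; linarith)
      rw [AffineMap.coe_comp, Set.image_comp, swp_image b hij, hd] at this
      rw [this, abs_of_neg h]
    · rw [abs_of_pos h]; exact hpos A h
  have hadd : ∀ x y, 0 < x → 0 < y → f (x + y) = f x + f y := by
    intro x y hx hy
    have hxy : 0 < x + y := by linarith
    have hAdet : LinearMap.det (dil (rt (x + y)) : E →ᵃ[ℝ] E).linear = x + y := by
      rw [dil_det, ← hn, hrt_pow _ hxy]
    set A : E →ᵃ[ℝ] E := dil (rt (x + y)) with hA
    obtain ⟨B, hB1, hB2⟩ := exists_affine_inv A (by rw [hAdet]; exact hxy.ne')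
    set t := y / (x + y) with ht
    have h0 : 0 < t := div_pos hy hxy
    have h1 : t < 1 := by rw [ht, div_lt_one hxy]; linarith
    have e1 : ∀ (i j : Fin (n + 1)) (t : ℝ), i ≠ j → 0 < t → t < 1 →
        (A '' sx b) ∩ hs ((cf b i j t).comp B) = (A.comp (shr b i j t)) '' sx b := by
      intro i j t hij h0 h1
      rw [image_cut A B hB1, sx_cut b hij h0 h1, AffineMap.coe_comp, Set.image_comp]
    have e2 : -((cf b i j t).comp B) = (cf b j i (1 - t)).comp B := by
      rw [← cf_neg]
      ext x
      simp
    have d1 : LinearMap.det (A.comp (shr b i j t)).linear = x := by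
      rw [AffineMap.comp_linear, LinearMap.det_comp, shr_det b hij, hAdet, ht]
      field_simp
      ring
    have d2 : LinearMap.det (A.comp (shr b j i (1 - t))).linear = y := by
      rw [AffineMap.comp_linear, LinearMap.det_comp, shr_det b hij.symm, hAdet, ht]
      field_simp
      ring
    have h2 := Z_cut (Z := Z) hval hsimple (image_sx_compact b A) (image_sx_convex b A)
      ((cf b i j t).comp B) ⟨A (b i), by
        rw [AffineMap.comp_apply, hB1]
        exact cf_ne b hij h0⟩
      (by rw [e1 i j t hij h0 h1]; exact hne.image _)
      (by rw [e2, e1 j i (1 - t) hij.symm (by linarith) (by linarith)]; exact hne.image _)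
    rw [e2, e1 i j t hij h0 h1, e1 j i (1 - t) hij.symm (by linarith) (by linarith),
      hpos A (by rw [hAdet]; exact hxy), hpos _ (by rw [d1]; exact hx),
      hpos _ (by rw [d2]; exact hy), hAdet, d1, d2] at h2
    exact h2
  have hrt1 : rt 1 = 1 := Real.one_rpow _
  have hlin := cauchy_usc f hadd (by
    intro v hv hlim
    have hr : Tendsto (fun k => rt (v k)) atTop (𝓝 1) := by
      have := hlim.rpow_const (p := (n : ℝ)⁻¹) (Or.inl one_ne_zero)
      rwa [Real.one_rpow] at this
    have := husc _ _ (tau_dilate (sx_compact b) (sx_convex b) hne (fun k => rt (v k))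
      (fun k => hrt_pos _ (hv k)) hr)
    simpa only [hf, hrt1, one_smul] using this)
  have hvol : (μ (sx b)).toReal ≠ 0 := by
    refine (ENNReal.toReal_pos ?_ (sx_compact b).measure_lt_top.ne).ne'
    have hint : (interior (sx b)).Nonempty :=
      interior_convexHull_nonempty_iff_affineSpan_eq_top.2 b.tot
    exact (Measure.measure_pos_of_nonempty_interior μ hint).ne'
  set c := f 1 / (μ (sx b)).toReal with hc
  classical
  let D : Set E → ℝ := fun K => if K = ∅ then 0 else Z (eIndicator K) - c * (μ K).toReal
  have hDe : D ∅ = 0 := by simp [D]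
  have hDn : ∀ K : Set E, K.Nonempty → D K = Z (eIndicator K) - c * (μ K).toReal :=
    fun K hK => by simp [D, hK.ne_empty]
  have hD : NullFun b D := by
    refine ⟨?_, ?_, ?_⟩
    · intro K h hK hcv hh
      have hU : (K ∩ hs h) ∪ (K ∩ hs (-h)) = K := by
        rw [← Set.inter_union_distrib_left, hs_univ, Set.inter_univ]
      rcases Set.eq_empty_or_nonempty (K ∩ hs h) with h1 | h1
      · rw [h1, Set.empty_union] at hU
        rw [h1, hU, hDe, zero_add]
      · rcases Set.eq_empty_or_nonempty (K ∩ hs (-h)) with h2 | h2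
        · rw [h2, Set.union_empty] at hU
          rw [h2, hU, hDe, add_zero]
        · rw [hDn _ h1, hDn _ h2, hDn K (h1.mono Set.inter_subset_left),
            Z_cut hval hsimple hK hcv h hh h1 h2, vol_hyp μ hK h hh]
          ring
    · intro K hK hcv hint
      rcases Set.eq_empty_or_nonempty K with h1 | h1
      · rw [h1, hDe]
      · rw [hDn K h1, hsimple _ (isLC_ind hK hcv h1) (by rw [edom_ind, hint])]
        have : μ K = 0 := by
          have h3 := hcv.addHaar_frontier μ
          rwa [frontier, hK.isClosed.closure_eq, hint, Set.sdiff_empty] at h3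
        simp [this]
    · intro A hA
      rw [hDn _ (hne.image _), habs A hA, hlin _ (abs_pos.2 hA), vol_affine, hc]
      field_simp
      ring
  refine ⟨c, fun P hP => ?_⟩
  have h1 := hD.polytope P hP
  obtain ⟨s, hs, rfl⟩ := hP
  rw [hDn _ (convexHull_nonempty_iff.2 hs)] at h1
  linarith

theorem stmt8_aux (n : ℕ) (Z : (EuclideanSpace ℝ (Fin n) → EReal) → ℝ)
    (hval : IsVal Z)
    (hsimple : ∀ u : EuclideanSpace ℝ (Fin n) → EReal, IsLC u →
      interior (edom u) = ∅ → Z u = 0)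
    (husc : TauUSC Z) (hsl : SLInv Z) (htrans : TransInv Z) :
    ∃ c₁ : ℝ, ∀ P : Set (EuclideanSpace ℝ (Fin n)), IsPolytope P →
      Z (eIndicator P) = c₁ * (volume P).toReal := by
  rcases Nat.eq_zero_or_pos n with rfl | hn
  · refine ⟨Z (eIndicator Set.univ) / (volume (Set.univ : Set (EuclideanSpace ℝ (Fin 0)))).toReal,
      ?_⟩
    rintro P ⟨s, hs, rfl⟩
    have hu : convexHull ℝ (s : Set (EuclideanSpace ℝ (Fin 0))) = Set.univ :=
      Set.Nonempty.eq_univ (convexHull_nonempty_iff.2 hs)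
    rw [hu, div_mul_cancel₀]
    refine (ENNReal.toReal_pos ?_ ?_).ne'
    · exact (Measure.measure_pos_of_nonempty_interior volume (by simp)).ne'
    · exact ((Set.finite_univ).isCompact.measure_lt_top).ne
  · exact stmt8_pos volume (by simpa using hn) Z hval hsimple husc hsl htrans


/-- If `Z : LC(ℝⁿ) → ℝ` is a simple, τ-upper semicontinuous, `SL_n(ℝ)`,
translation and dually epi-translation invariant valuation, then there is a constant `c₁`
with `Z(I_P) = c₁ ⬝ V_n(P)` for every polytope `P ⊂ ℝⁿ`. -/
theorem stmt8 (n : ℕ) (Z : (EuclideanSpace ℝ (Fin n) → EReal) → ℝ)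
    (hval : IsVal Z)
    (hsimple : ∀ u : EuclideanSpace ℝ (Fin n) → EReal, IsLC u →
      interior (edom u) = ∅ → Z u = 0)
    (husc : TauUSC Z) (hsl : SLInv Z) (htrans : TransInv Z) (hdual : DualTransInv Z) :
    ∃ c₁ : ℝ, ∀ P : Set (EuclideanSpace ℝ (Fin n)), IsPolytope P →
      Z (eIndicator P) = c₁ * (volume P).toReal := by
  exact stmt8_aux n Z hval hsimple husc hsl htrans

end
end

section
/- Let Z : LC(ℝ) → ℝ be a simple, τ-upper semicontinuous, translation invariant and dually epi-translation invariant valuation that vanishes on indicator functions of closed intervals, and let q(x) = x²/2. Then for every a > 0 and every m > 0 and every closed bounded interval J, Z(a·q + I_J) = ζ(a)·V₁(J), where ζ(a) := Z(a·q + I_{[-m,m]})/(2m); in particular this value does not depend on the choice of m. -/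
open MeasureTheory Filter Topology Pointwise Asymptotics

noncomputable section

variable {E : Type*} [NormedAddCommGroup E] [NormedSpace ℝ E]

/-- The function `ζ(a) = Z(a·q + I_{[-m,m]})/(2m)`, where `q(x) = x²/2`. -/
noncomputable def zetaOf (Z : (ℝ → EReal) → ℝ) (m : ℝ) : ℝ → ℝ := fun a =>
  Z (fun x => ((a * (x ^ 2 / 2) : ℝ) : EReal) + eIndicator (Set.Icc (-m) m) x) / (2 * m)

/-- An additive function on the half-line with one-sided upper semicontinuity at `1` is linear. -/
lemma additive_linear (f : ℝ → ℝ) (hadd : ∀ s t : ℝ, 0 ≤ s → 0 ≤ t → f (s + t) = f s + f t)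
    (husc : ∀ (L : ℕ → ℝ) (c : ℝ), (∀ k, 1 ≤ L k) → (∀ k, L k ≤ 2) → Tendsto L atTop (𝓝 1) →
      Tendsto (fun k => f (L k)) atTop (𝓝 c) → c ≤ f 1) :
    ∀ t : ℝ, 0 ≤ t → f t = f 1 * t := by
  have key : ∀ s t s' t' : ℝ, 0 ≤ s → 0 ≤ t → 0 ≤ s' → 0 ≤ t' → s - t = s' - t' →
      f s - f t = f s' - f t' := by
    intro s t s' t' hs ht hs' ht' h
    have h1 := hadd s t' hs ht'
    have h2 := hadd s' t hs' ht
    have h3 : s + t' = s' + t := by linarith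
    rw [h3] at h1
    linarith
  let F : ℝ →+ ℝ := AddMonoidHom.mk' (fun t => f (max t 0) - f (max (-t) 0)) (by
    intro x y
    have e : ∀ x : ℝ, max x 0 - max (-x) 0 = x := by
      intro x
      rcases le_total x 0 with h | h
      · rw [max_eq_right h, max_eq_left (by linarith)]; ring
      · rw [max_eq_left h, max_eq_right (by linarith)]; ring
    have p : ∀ x : ℝ, 0 ≤ max x 0 := fun x => le_max_right _ _
    have := key (max (x + y) 0) (max (-(x + y)) 0) (max x 0 + max y 0)
      (max (-x) 0 + max (-y) 0) (p _) (p _) (add_nonneg (p _) (p _)) (add_nonneg (p _) (p _))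
      (by have := e x; have := e y; have := e (x + y); linarith)
    rw [hadd _ _ (p _) (p _), hadd _ _ (p _) (p _)] at this
    linarith)
  have f0 : f 0 = 0 := by have := hadd 0 0 le_rfl le_rfl; simp at this; exact this
  have Ff : ∀ t : ℝ, 0 ≤ t → F t = f t := by
    intro t ht
    change f (max t 0) - f (max (-t) 0) = f t
    rw [max_eq_left ht, max_eq_right (by linarith), f0, sub_zero]
  have Fq : ∀ q : ℚ, ∀ x : ℝ, F ((q : ℝ) * x) = q * F x := by
    intro q x
    have := F.toRatLinearMap.map_smul q x
    simpa [Rat.smul_def] using this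
  intro t ht
  by_contra hne
  set d := f t - f 1 * t with hd
  have hd0 : d ≠ 0 := fun h => hne (by linarith)
  obtain ⟨r, hr⟩ : ∃ r : ℚ, 0 < (r : ℝ) * d := by
    rcases lt_or_gt_of_ne hd0 with h | h
    · exact ⟨-1, by push_cast; linarith⟩
    · exact ⟨1, by push_cast; linarith⟩
  have hq : ∀ k : ℕ, ∃ q : ℚ, 1 - r * t < q ∧ (q : ℝ) < 1 + 1 / ((k : ℝ) + 1) - r * t := by
    intro k
    apply exists_rat_btwn
    have : 0 < 1 / ((k : ℝ) + 1) := by positivity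
    linarith
  choose q hq1 hq2 using hq
  have hL : Tendsto (fun k => r * t + (q k : ℝ)) atTop (𝓝 1) := by
    refine tendsto_of_tendsto_of_tendsto_of_le_of_le (g := fun _ => (1:ℝ))
      (h := fun k : ℕ => 1 + 1 / ((k : ℝ) + 1)) tendsto_const_nhds ?_ ?_ ?_
    · simpa using (tendsto_const_nhds (x := (1:ℝ))).add tendsto_one_div_add_atTop_nhds_zero_nat
    · intro k; have := hq1 k; dsimp only; linarith
    · intro k; have := hq2 k; dsimp only; linarith
  have hfL : ∀ k, f (r * t + (q k : ℝ)) = r * d + f 1 * (r * t + (q k : ℝ)) := by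
    intro k
    rw [← Ff _ (by have := hq1 k; linarith), map_add, Fq]
    have := Fq (q k) 1
    rw [mul_one] at this
    rw [this, Ff 1 zero_le_one, Ff t ht, hd]
    ring
  have := husc (fun k => r * t + (q k : ℝ)) (r * d + f 1 * 1)
    (fun k => by have := hq1 k; linarith)
    (fun k => by
      have := hq2 k
      have h2 : 1 / ((k : ℝ) + 1) ≤ 1 := by
        rw [div_le_one (by positivity)]
        have : (0:ℝ) ≤ k := Nat.cast_nonneg k
        linarith
      linarith) hL
    (by simp only [hfL]; exact tendsto_const_nhds.add (tendsto_const_nhds.mul hL))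
  linarith

/-- The function `a·q + I_{[α,β]}`. -/
def QI (a α β : ℝ) : ℝ → EReal := fun x =>
  ((a * (x ^ 2 / 2) : ℝ) : EReal) + eIndicator (Set.Icc α β) x

lemma QI_in {a α β x : ℝ} (h : x ∈ Set.Icc α β) : QI a α β x = ((a * (x ^ 2 / 2) : ℝ) : EReal) := by
  simp only [QI, eIndicator, if_pos h, add_zero]

lemma QI_out {a α β x : ℝ} (h : x ∉ Set.Icc α β) : QI a α β x = ⊤ := by
  simp only [QI, eIndicator, if_neg h]
  exact EReal.coe_add_top _

lemma QI_ge (a α β x : ℝ) : ((a * (x ^ 2 / 2) : ℝ) : EReal) ≤ QI a α β x := by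
  by_cases h : x ∈ Set.Icc α β
  · rw [QI_in h]
  · rw [QI_out h]; exact le_top

lemma QI_edom (a α β : ℝ) : edom (QI a α β) = Set.Icc α β := by
  ext x
  by_cases h : x ∈ Set.Icc α β
  · simp only [edom, Set.mem_ofPred_eq, QI_in h, h, EReal.coe_lt_top]
  · simp only [edom, Set.mem_ofPred_eq, QI_out h, h, lt_irrefl]

lemma QI_lip {a α β B : ℝ} (ha : 0 < a) (h1 : -B ≤ α) (h2 : β ≤ B) :
    LipBound (QI a α β) (a * B) := by
  intro x hx y hy
  rw [QI_edom] at hx hy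
  have hx := interior_subset hx
  have hy := interior_subset hy
  rw [QI_in hx, QI_in hy, EReal.toReal_coe, EReal.toReal_coe, Real.norm_eq_abs]
  have e : a * (x ^ 2 / 2) - a * (y ^ 2 / 2) = (a * ((x + y) / 2)) * (x - y) := by ring
  rw [e, abs_mul, abs_mul, abs_of_pos ha]
  have : |(x + y) / 2| ≤ B := by
    rw [abs_le]; constructor <;> linarith [hx.1, hx.2, hy.1, hy.2]
  gcongr

lemma QI_lc {a α β : ℝ} (ha : 0 < a) (h : α ≤ β) : IsLC (QI a α β) := by
  refine ⟨?_, ?_, ?_, ?_, ?_, ?_⟩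
  · intro x y t ht0 ht1
    have ht1' : 0 < 1 - t := by linarith
    by_cases hx : x ∈ Set.Icc α β
    · by_cases hy : y ∈ Set.Icc α β
      · have hxy : t • x + (1 - t) • y ∈ Set.Icc α β :=
          (convex_Icc α β) hx hy ht0.le ht1'.le (by ring)
        rw [QI_in hx, QI_in hy, QI_in hxy]
        norm_cast
        simp only [smul_eq_mul]
        have : 0 ≤ a * (t * (1 - t) * (x - y) ^ 2) := by positivity
        nlinarith
      · rw [QI_out hy, QI_in hx, EReal.coe_mul_top_of_pos ht1', ← EReal.coe_mul,
          EReal.coe_add_top]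
        exact le_top
    · rw [QI_out hx, EReal.coe_mul_top_of_pos ht0, EReal.top_add_of_ne_bot]
      · exact le_top
      · by_cases hy : y ∈ Set.Icc α β
        · rw [QI_in hy, ← EReal.coe_mul]; exact EReal.coe_ne_bot _
        · rw [QI_out hy, EReal.coe_mul_top_of_pos ht1']; exact top_ne_bot
  · intro x c hc
    by_cases hx : x ∈ Set.Icc α β
    · rw [QI_in hx] at hc
      have hcont : Continuous (fun y : ℝ => ((a * (y ^ 2 / 2) : ℝ) : EReal)) :=
        continuous_coe_real_ereal.comp (by fun_prop)
      filter_upwards [hcont.continuousAt.eventually (lt_mem_nhds hc)] with y hy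
      exact hy.trans_le (QI_ge _ _ _ _)
    · rw [QI_out hx] at hc
      filter_upwards [isClosed_Icc.isOpen_compl.mem_nhds hx] with y hy
      rw [QI_out hy]; exact hc
  · intro x
    exact ne_of_gt ((EReal.bot_lt_coe _).trans_le (QI_ge a α β x))
  · exact ⟨α, by rw [QI_in (Set.left_mem_Icc.2 h)]; exact EReal.coe_ne_top _⟩
  · rw [QI_edom]; exact isCompact_Icc
  · refine ⟨a * (|α| + |β| + 1), by positivity, QI_lip ha ?_ ?_⟩
    · have := neg_abs_le α; have := abs_nonneg β; linarith
    · have := le_abs_self β; have := abs_nonneg α; linarith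

lemma QI_tau {a : ℝ} (ha : 0 < a) (L : ℕ → ℝ) (h1 : ∀ k, 1 ≤ L k) (h2 : ∀ k, L k ≤ 2)
    (hL : Tendsto L atTop (𝓝 1)) : TauConv (fun k => QI a 0 (L k)) (QI a 0 1) := by
  have hout : ∀ (x : ℝ) (xk : ℕ → ℝ), x ∉ Set.Icc (0:ℝ) 1 → Tendsto xk atTop (𝓝 x) →
      ∀ᶠ k in atTop, QI a 0 (L k) (xk k) = ⊤ := by
    intro x xk hx hxk
    rw [Set.mem_Icc, not_and_or, not_le, not_le] at hx
    rcases hx with hx | hx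
    · filter_upwards [hxk.eventually (gt_mem_nhds hx)] with k hk
      exact QI_out fun h => absurd h.1 (not_le.2 hk)
    · filter_upwards [hL.eventually_lt hxk hx] with k hk
      exact QI_out fun h => absurd h.2 (not_le.2 hk)
  refine ⟨fun k => QI_lc ha (by linarith [h1 k]), QI_lc ha zero_le_one, ?_, ?_, ?_⟩
  · intro x xk hxk
    by_cases hx : x ∈ Set.Icc (0:ℝ) 1
    · rw [QI_in hx]
      have hcont : Continuous (fun y : ℝ => ((a * (y ^ 2 / 2) : ℝ) : EReal)) :=
        continuous_coe_real_ereal.comp (by fun_prop)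
      have := ((hcont.tendsto x).comp hxk).liminf_eq
      rw [← this]
      exact liminf_le_liminf (Eventually.of_forall fun k => QI_ge _ _ _ _)
    · have : Tendsto (fun k => QI a 0 (L k) (xk k)) atTop (𝓝 ⊤) :=
        tendsto_const_nhds.congr' ((hout x xk hx hxk).mono fun k hk => hk.symm)
      rw [this.liminf_eq]; exact le_top
  · intro x
    refine ⟨fun _ => x, tendsto_const_nhds, ?_⟩
    by_cases hx : x ∈ Set.Icc (0:ℝ) 1
    · refine tendsto_const_nhds.congr fun k => ?_
      dsimp only
      rw [QI_in hx, QI_in ⟨hx.1, hx.2.trans (h1 k)⟩]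
    · rw [QI_out hx]
      exact tendsto_const_nhds.congr'
        ((hout x (fun _ => x) hx tendsto_const_nhds).mono fun k hk => hk.symm)
  · exact ⟨a * 2, by positivity, fun k => QI_lip ha (by norm_num) (h2 k)⟩

/-- For a simple, τ-upper semicontinuous, translation and dually
epi-translation invariant valuation `Z` on `LC(ℝ)` vanishing on indicators of closed intervals,
`Z(a·q + I_J) = ζ(a)·V₁(J)` for every `a > 0`, `m > 0` and closed bounded interval `J`, where
`ζ(a) = Z(a·q + I_{[-m,m]})/(2m)`; in particular this value does not depend on `m`. -/
theorem stmt11 (Z : (ℝ → EReal) → ℝ)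
    (hval : IsVal Z) (husc : TauUSC Z) (htrans : TransInv Z) (hdual : DualTransInv Z)
    (hsimple : ∀ u : ℝ → EReal, IsLC u → (∃ x : ℝ, edom u = {x}) → Z u = 0)
    (hvanish : ∀ a b : ℝ, a ≤ b → Z (eIndicator (Set.Icc a b)) = 0) :
    ∀ a : ℝ, 0 < a → ∀ m : ℝ, 0 < m →
      (∀ α β : ℝ, α ≤ β →
        Z (fun x => ((a * (x ^ 2 / 2) : ℝ) : EReal) + eIndicator (Set.Icc α β) x) =
          zetaOf Z m a * (β - α)) ∧
      (∀ m' : ℝ, 0 < m' → zetaOf Z m a = zetaOf Z m' a) := by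
  intro a ha m hm
  have hshift : ∀ α β : ℝ, α ≤ β → Z (QI a α β) = Z (QI a 0 (β - α)) := by
    intro α β h
    rw [← hdual (QI a 0 (β - α)) (QI_lc ha (by linarith)) ((a * α) • LinearMap.id) (a * (α ^ 2 / 2)),
      ← htrans (QI a α β) (QI_lc ha h) (-α)]
    congr 1
    funext x
    by_cases hx : x ∈ Set.Icc 0 (β - α)
    · rw [QI_in hx, QI_in (x := x - -α) ⟨by linarith [hx.1], by linarith [hx.2]⟩, ← EReal.coe_add]
      congr 1
      simp only [LinearMap.smul_apply, LinearMap.id_apply, smul_eq_mul]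
      ring
    · rw [QI_out hx, QI_out (x := x - -α), EReal.top_add_coe]
      intro h'
      exact hx ⟨by linarith [h'.1], by linarith [h'.2]⟩
  have hadd : ∀ s t : ℝ, 0 ≤ s → 0 ≤ t → Z (QI a 0 (s + t)) = Z (QI a 0 s) + Z (QI a 0 t) := by
    intro s t hs ht
    have emin : (fun x => min (QI a 0 s x) (QI a s (s + t) x)) = QI a 0 (s + t) := by
      funext x
      by_cases h1 : x ∈ Set.Icc 0 s
      · rw [QI_in h1, QI_in (x := x) (α := 0) (β := s + t) ⟨h1.1, by linarith [h1.2]⟩]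
        exact min_eq_left (QI_ge _ _ _ _)
      · rw [QI_out h1, min_eq_right le_top]
        by_cases h2 : x ∈ Set.Icc s (s + t)
        · rw [QI_in h2, QI_in ⟨by linarith [h2.1], h2.2⟩]
        · rw [QI_out h2, QI_out]
          intro h3
          rcases le_total x s with h | h
          · exact h1 ⟨h3.1, h⟩
          · exact h2 ⟨h, h3.2⟩
    have emax : (fun x => max (QI a 0 s x) (QI a s (s + t) x)) = QI a s s := by
      funext x
      by_cases h1 : x ∈ Set.Icc 0 s
      · rw [QI_in h1, max_eq_right (QI_ge _ _ _ _)]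
        by_cases h2 : x ∈ Set.Icc s (s + t)
        · rw [QI_in h2, QI_in ⟨h2.1, h1.2⟩]
        · rw [QI_out h2, QI_out]
          intro h3
          exact h2 ⟨h3.1, by linarith [h3.2]⟩
      · rw [QI_out h1, max_eq_left le_top, QI_out]
        intro h3
        exact h1 ⟨by linarith [h3.1], h3.2⟩
    have h := hval (QI a 0 s) (QI a s (s + t)) (QI_lc ha hs) (QI_lc ha (by linarith))
      (by rw [emin]; exact QI_lc ha (by linarith))
    rw [emin, emax, hsimple (QI a s s) (QI_lc ha le_rfl) ⟨s, by rw [QI_edom, Set.Icc_self]⟩,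
      hshift s (s + t) (by linarith)] at h
    rw [add_sub_cancel_left, add_zero] at h
    exact h
  have hlin := additive_linear (fun t => Z (QI a 0 t)) hadd (by
    intro L c h1 h2 hL hc
    have := husc _ _ (QI_tau ha L h1 h2 hL)
    rwa [hc.limsup_eq] at this)
  have hall : ∀ α β : ℝ, α ≤ β → Z (QI a α β) = Z (QI a 0 1) * (β - α) := by
    intro α β h
    rw [hshift α β h]
    exact hlin (β - α) (by linarith)
  have hz : ∀ m : ℝ, 0 < m → zetaOf Z m a = Z (QI a 0 1) := by
    intro m hm
    change Z (QI a (-m) m) / (2 * m) = _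
    rw [hall (-m) m (by linarith)]
    field_simp
    ring
  refine ⟨fun α β h => ?_, fun m' hm' => by rw [hz m hm, hz m' hm']⟩
  rw [hz m hm]
  exact hall α β h

end
end
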